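/- arXiv:1807.00642 — 6 statements merged into one kernel-verified Lean document; each statement's English description precedes it below -/
import Mathlib

section
/- (Macaulay-type maximal growth) Let Z ⊂ ℙⁿ(ℂ) be a finite set. If for some j > 0 one has Dh_Z(j) ≤ j, then Dh_Z(j+1) ≤ Dh_Z(j). In particular, if Dh_Z(j) = 0 for some j > 0, then Dh_Z(i) = 0 for all i ≥ j. -/
open MvPolynomial

abbrev ProjPt (n : ℕ) := Projectivization ℂ (Fin (n+1) → ℂ)

/-- The linear form with coefficient vector `v`: `v 0 • x 0 + ⋯ + v n • x n`. -/
noncomputable def linForm (n : ℕ) (v : Fin (n+1) → ℂ) : MvPolynomial (Fin (n+1)) ℂ :=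
  ∑ i, C (v i) * X i

/-- The evaluation map of degree `d` on (coordinate vectors of) the finite set
`Z ⊂ ℙⁿ(ℂ)`, from degree-`d` forms to `ℂ^{ℓ(Z)}`. -/
noncomputable def evalMap (n d : ℕ) (Z : Finset (ProjPt n)) :
    homogeneousSubmodule (Fin (n+1)) ℂ d →ₗ[ℂ] ({ x // x ∈ Z } → ℂ) where
  toFun F := fun P => eval (P : ProjPt n).rep (F : MvPolynomial (Fin (n+1)) ℂ)
  map_add' F G := by funext P; simp
  map_smul' c F := by funext P; simp

/-- The Hilbert function of a finite set `Z ⊂ ℙⁿ(ℂ)`: the rank of the evaluation map. -/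
noncomputable def hilb (n : ℕ) (Z : Finset (ProjPt n)) (d : ℕ) : ℕ :=
  Module.finrank ℂ ↥(LinearMap.range (evalMap n d Z))

/-- The Hilbert function, extended to `ℤ` by `0` in negative degrees. -/
noncomputable def hilbZ (n : ℕ) (Z : Finset (ProjPt n)) (d : ℤ) : ℤ :=
  if d < 0 then 0 else hilb n Z d.toNat

/-- The first difference of the Hilbert function, `Dh_Z(d) = h_Z(d) - h_Z(d-1)`. -/
noncomputable def dHilb (n : ℕ) (Z : Finset (ProjPt n)) (d : ℤ) : ℤ :=
  hilbZ n Z d - hilbZ n Z (d - 1)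

/-!
Let `L` be the space of values of linear forms on `Z` inside the algebra `A = ℂ^Z`.  The forms of
degree `d` take their values in `L ^ d`, so `h_Z(d) = dim L ^ d`, and some `l ∈ L` vanishes at no
point of `Z`, so multiplication by `l` is injective on `A`.  Hence `Dh_Z(d + 1)` is the dimension of
`L ^ (d + 1) / l L ^ d`, which is the number of monomials of degree `d + 1` that are not congruent
modulo `l L ^ d` to a combination of smaller ones.  These standard monomials are closed under
division by a variable, and at most `d` monomials, each of degree at least `d`, always have at least
as many divisors of one degree less.
-/

open Finset
open scoped MonomialOrder

section Counting

theorem exists_notMem_forall_lt_mem (V : Finset ℕ) : ∃ b ∉ V, ∀ a < b, a ∈ V := by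
  have hex : ∃ b, b ∉ V := Infinite.exists_notMem_finset V
  exact ⟨Nat.find hex, Nat.find_spec hex, fun a ha => not_not.1 (Nat.find_min hex ha)⟩

variable {κ : Type*} {s t : Finset κ} {f : κ → ℕ}

theorem card_filter_eq_add_le_card {a : ℕ} (ha : ∀ c < a, c ∈ s.image f) :
    #{i ∈ s | f i = a} + a ≤ #s := by
  have hlow : a ≤ #{i ∈ s | ¬ f i = a} := by
    calc a = #(range a) := (card_range a).symm
      _ ≤ #({i ∈ s | ¬ f i = a}.image f) := card_le_card fun c hc => by
          obtain ⟨i, hi, rfl⟩ := mem_image.1 (ha c (mem_range.1 hc))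
          exact mem_image_of_mem f (mem_filter.2 ⟨hi, (mem_range.1 hc).ne⟩)
      _ ≤ _ := card_image_le
  have hsplit := card_filter_add_card_filter_not (s := s) (fun i => f i = a)
  omega

theorem card_filter_lt_eq_sum (s : Finset κ) (f : κ → ℕ) (b : ℕ) :
    #{i ∈ s | f i < b} = ∑ a ∈ range b, #{i ∈ s | f i = a} := by
  rw [card_eq_sum_card_fiberwise (f := f) (t := range b) fun i hi => by simp_all]
  refine sum_congr rfl fun a ha => ?_
  rw [filter_filter]
  exact congrArg card (filter_congr fun i _ => by grind)

theorem card_filter_lt_le_card_filter_lt {b : ℕ}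
    (h : ∀ a < b, #{i ∈ s | f i = a} ≤ #{i ∈ t | f i = a}) :
    #{i ∈ s | f i < b} ≤ #{i ∈ t | f i < b} := by
  rw [card_filter_lt_eq_sum, card_filter_lt_eq_sum]
  exact sum_le_sum fun a ha => h a (mem_range.1 ha)

end Counting

section Shadow

variable {ι : Type*} [DecidableEq ι] {T : Finset ι} {M N : Finset (ι →₀ ℕ)}

/-- The shadow of a set `M` of exponents in the directions `T`: the exponents of the monomials
obtained from those in `M` by removing one factor among the variables in `T`. -/
noncomputable def exponentShadow (T : Finset ι) (M : Finset (ι →₀ ℕ)) : Finset (ι →₀ ℕ) :=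
  T.biUnion fun i => {m ∈ M | m i ≠ 0}.image (· - Finsupp.single i 1)

theorem mem_exponentShadow {k : ι →₀ ℕ} :
    k ∈ exponentShadow T M ↔ ∃ i ∈ T, k + Finsupp.single i 1 ∈ M := by
  simp only [exponentShadow, mem_biUnion, mem_image, mem_filter]
  constructor
  · rintro ⟨i, hi, m, ⟨hm, hmi⟩, rfl⟩
    have hle : Finsupp.single i 1 ≤ m := by simpa using Nat.one_le_iff_ne_zero.2 hmi
    exact ⟨i, hi, by rwa [tsub_add_cancel_of_le hle]⟩
  · rintro ⟨i, hi, hk⟩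
    exact ⟨i, hi, _, ⟨hk, by simp⟩, add_tsub_cancel_right _ _⟩

theorem exponentShadow_filter_subset {x : ι} (hx : x ∉ T) (a : ℕ) :
    exponentShadow T {m ∈ M | m x = a} ⊆ {k ∈ exponentShadow (insert x T) M | k x = a} := by
  intro k hk
  obtain ⟨i, hi, hki⟩ := mem_exponentShadow.1 hk
  obtain ⟨hkM, hka⟩ := mem_filter.1 hki
  have hix : i ≠ x := fun h => hx (h ▸ hi)
  exact mem_filter.2
    ⟨mem_exponentShadow.2 ⟨i, mem_insert_of_mem hi, hkM⟩, by simpa [hix] using hka⟩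

theorem card_filter_not_lt_le_card_exponentShadow {x : ι} (hx : x ∈ T) {b : ℕ}
    (hb : ∀ m ∈ M, m x ≠ b) :
    #{m ∈ M | ¬ m x < b} ≤ #{k ∈ exponentShadow T M | ¬ k x < b} := by
  have hlt : ∀ m ∈ M, ¬ m x < b → b < m x := fun m hm hmb =>
    lt_of_le_of_ne (not_lt.1 hmb) (hb m hm).symm
  have hle : ∀ m ∈ M, ¬ m x < b → Finsupp.single x 1 ≤ m := fun m hm hmb => by
    simpa using Nat.one_le_of_lt (hlt m hm hmb)
  refine card_le_card_of_injOn (· - Finsupp.single x 1) (fun m hm => ?_) fun m hm k hk h => ?_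
  · obtain ⟨hmM, hmb⟩ := mem_filter.1 hm
    refine mem_coe.2 (mem_filter.2 ⟨mem_exponentShadow.2 ⟨x, hx, ?_⟩, ?_⟩)
    · rwa [tsub_add_cancel_of_le (hle m hmM hmb)]
    · have hbm := hlt m hmM hmb
      simp only [Finsupp.tsub_apply, Finsupp.single_eq_same]
      omega
  · obtain ⟨hmM, hmb⟩ := mem_filter.1 hm
    obtain ⟨hkM, hkb⟩ := mem_filter.1 hk
    exact (tsub_left_inj (hle m hmM hmb) (hle k hkM hkb)).1 h

/-- Let `b` be the first exponent of `x` missing from `M`.  Above `b`, removing one factor `x` stays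
above `b`.  Below `b`, the layer where `x` has exponent `a` avoids at least `a` elements of `M`,
which compensates for the drop by `a` of the degree in the other variables. -/
theorem card_le_card_exponentShadow (hM : ∀ m ∈ M, #M ≤ ∑ i ∈ T, m i) :
    #M ≤ #(exponentShadow T M) := by
  induction T using Finset.induction_on generalizing M with
  | empty =>
    rcases M.eq_empty_or_nonempty with rfl | ⟨m, hm⟩
    · simp
    · exact (hM m hm).trans (by simp)
  | insert x T hx ih =>
    obtain ⟨b, hb, hlt⟩ := exists_notMem_forall_lt_mem (M.image (· x))
    have hlayer : ∀ a < b, #{m ∈ M | m x = a} ≤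
        #{k ∈ exponentShadow (insert x T) M | k x = a} := fun a hab => by
      refine (ih fun m hm => ?_).trans (card_le_card (exponentShadow_filter_subset hx a))
      obtain ⟨hmM, hma⟩ := mem_filter.1 hm
      have hsum := hM m hmM
      rw [sum_insert hx, hma] at hsum
      have hcount := card_filter_eq_add_le_card fun c hc => hlt c (hc.trans hab)
      omega
    have hbelow := card_filter_lt_le_card_filter_lt hlayer
    have habove := card_filter_not_lt_le_card_exponentShadow (M := M) (mem_insert_self x T)
      fun m hm h => hb (mem_image.2 ⟨m, hm, h⟩)
    calc #M = #{m ∈ M | m x < b} + #{m ∈ M | ¬ m x < b} :=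
          (card_filter_add_card_filter_not _).symm
      _ ≤ #{k ∈ exponentShadow (insert x T) M | k x < b} +
          #{k ∈ exponentShadow (insert x T) M | ¬ k x < b} := add_le_add hbelow habove
      _ = _ := card_filter_add_card_filter_not _

theorem card_le_card_of_exponentShadow_subset [Fintype ι] {d : ℕ} (hM : ∀ m ∈ M, d < m.degree)
    (hMN : exponentShadow univ M ⊆ N) (hN : #N ≤ d) : #M ≤ #N := by
  by_contra! hlt
  obtain ⟨M', hM'M, hM'⟩ := exists_subset_card_eq (Nat.succ_le_of_lt hlt)
  have hshadow : exponentShadow univ M' ⊆ N := fun k hk => by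
    obtain ⟨i, hi, hki⟩ := mem_exponentShadow.1 hk
    exact hMN (mem_exponentShadow.2 ⟨i, hi, hM'M hki⟩)
  have hle : #M' ≤ #(exponentShadow univ M') := card_le_card_exponentShadow fun m hm => by
    have hdeg := hM m (hM'M hm)
    rw [Finsupp.degree_eq_sum] at hdeg
    omega
  have := card_le_card hshadow
  omega

end Shadow

section Dimension

variable {K V : Type*} [DivisionRing K] [AddCommGroup V] [Module K V]

theorem finrank_sup_span_singleton_of_notMem {W : Submodule K V} [FiniteDimensional K W] {v : V}
    (hv : v ∉ W) : Module.finrank K ↥(W ⊔ Submodule.span K {v}) = Module.finrank K W + 1 := by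
  have hne : v ≠ 0 := fun h => hv (h ▸ W.zero_mem)
  have hdisj : W ⊓ Submodule.span K {v} = ⊥ :=
    ((Submodule.disjoint_span_singleton' hne).2 hv).eq_bot
  have hfinrank := Submodule.finrank_sup_add_finrank_inf_eq W (Submodule.span K {v})
  rwa [hdisj, finrank_bot, add_zero, finrank_span_singleton hne] at hfinrank

open Classical in
theorem finrank_sup_span_image_eq_add_card {κ α : Type*} [LinearOrder α] {g : κ → α}
    (hg : Function.Injective g) (W : Submodule K V) [FiniteDimensional K W] (f : κ → V)
    (s : Finset κ) :
    Module.finrank K ↥(W ⊔ Submodule.span K (f '' s)) = Module.finrank K W +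
      #{i ∈ s | f i ∉ W ⊔ Submodule.span K (f '' {j | j ∈ s ∧ g j < g i})} := by
  induction s using Finset.induction_on_max_value g with
  | empty =>
    rw [coe_empty, Set.image_empty, Submodule.span_empty, sup_bot_eq]
    simp
  | insert a s ha hmax ih =>
    have hlt : ∀ i ∈ s, g i < g a := fun i hi =>
      lt_of_le_of_ne (hmax i hi) fun h => ha (hg h ▸ hi)
    have hself : {j | j ∈ insert a s ∧ g j < g a} = (s : Set κ) := by
      ext j
      grind
    have hold : ∀ i ∈ s, {j | j ∈ insert a s ∧ g j < g i} = {j | j ∈ s ∧ g j < g i} := by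
      intro i hi
      ext j
      grind
    have hfilter : {i ∈ s | f i ∉ W ⊔ Submodule.span K (f '' {j | j ∈ insert a s ∧ g j < g i})} =
        {i ∈ s | f i ∉ W ⊔ Submodule.span K (f '' {j | j ∈ s ∧ g j < g i})} :=
      filter_congr fun i hi => by rw [hold i hi]
    have hspan : W ⊔ Submodule.span K (f '' ↑(insert a s)) =
        (W ⊔ Submodule.span K (f '' s)) ⊔ Submodule.span K {f a} := by
      rw [coe_insert, Set.image_insert_eq, Submodule.span_insert, sup_assoc,
        sup_comm (Submodule.span K {f a})]
    have : FiniteDimensional K (Submodule.span K (f '' (s : Set κ))) :=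
      FiniteDimensional.span_of_finite K (s.finite_toSet.image f)
    rw [filter_insert, hself, hfilter, hspan]
    by_cases hfa : f a ∈ W ⊔ Submodule.span K (f '' s)
    · rw [if_neg (not_not.2 hfa), sup_eq_left.2 (by simpa using hfa), ih]
    · rw [if_pos hfa, card_insert_of_notMem (by simp [ha]), ← add_assoc, ← ih,
        finrank_sup_span_singleton_of_notMem hfa]

end Dimension

section StandardMonomials

variable {K A ι : Type*} [CommSemiring K] [CommSemiring A] [Algebra K A]

/-- The monomial `∏ i, x i ^ m i` in the elements `x i` of an algebra. -/
def monomialValue (x : ι → A) (m : ι →₀ ℕ) : A := m.prod fun i k => x i ^ k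

theorem monomialValue_add_single (x : ι → A) (m : ι →₀ ℕ) (i : ι) :
    monomialValue x (m + Finsupp.single i 1) = x i * monomialValue x m := by
  classical
  rw [monomialValue, Finsupp.prod_add_index' (by simp) (by simp [pow_add]), mul_comm]
  simp [monomialValue]

theorem map_aeval_homogeneousSubmodule (x : ι → A) (d : ℕ) :
    (homogeneousSubmodule ι K d).map (aeval x).toLinearMap =
      Submodule.span K (Set.range x) ^ d := by
  rw [← homogeneousSubmodule_one_pow, Submodule.map_pow, homogeneousSubmodule_one_eq_span_X,
    Submodule.map_span, ← Set.range_comp]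
  congr
  ext i
  simp

theorem span_range_pow_eq_span_monomialValue (x : ι → A) (d : ℕ) :
    Submodule.span K (Set.range x) ^ d =
      Submodule.span K (monomialValue x '' {m | m.degree = d}) := by
  rw [← map_aeval_homogeneousSubmodule, homogeneousSubmodule_eq_finsupp_supported,
    AddMonoidAlgebra.supported_eq_span_single, Submodule.map_span, Set.image_image]
  congr 2
  ext m
  simp [MvPolynomial.single_eq_monomial, aeval_monomial, monomialValue]

variable (K) in
/-- The elements of degree `d + 1` that are congruent modulo `l * span (range x) ^ d` to a linear
combination of the monomials of degree `d + 1` in `x` smaller than `m`. -/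
def lowerSpan (mo : MonomialOrder ι) (x : ι → A) (l : A) (d : ℕ) (m : ι →₀ ℕ) :
    Submodule K A :=
  Submodule.span K {l} * Submodule.span K (Set.range x) ^ d ⊔
    Submodule.span K (monomialValue x '' {k | k.degree = d + 1 ∧ k ≺[mo] m})

theorem mul_mem_lowerSpan {mo : MonomialOrder ι} {x : ι → A} {l v : A} {d : ℕ} {m : ι →₀ ℕ}
    (hv : v ∈ lowerSpan K mo x l d m) (i : ι) :
    x i * v ∈ lowerSpan K mo x l (d + 1) (m + Finsupp.single i 1) := by
  have hmul := Submodule.mul_mem_mul (Submodule.mem_span_singleton_self (R := K) (x i)) hv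
  rw [lowerSpan, Submodule.mul_sup, mul_left_comm, Submodule.span_mul_span] at hmul
  refine (sup_le_sup ?_ (Submodule.span_mono ?_) : _ ≤ lowerSpan K mo x l (d + 1) _) hmul
  · rw [pow_succ']
    gcongr
    simp
  · rintro _ ⟨_, rfl, _, ⟨k, ⟨hk, hkm⟩, rfl⟩, rfl⟩
    refine ⟨k + Finsupp.single i 1, ⟨by simp [hk], ?_⟩, monomialValue_add_single x k i⟩
    simpa only [map_add, add_lt_add_iff_right] using hkm

variable [Fintype ι] [DecidableEq ι]

theorem mem_finsuppAntidiag_univ {m : ι →₀ ℕ} {d : ℕ} :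
    m ∈ finsuppAntidiag univ d ↔ m.degree = d := by
  simp [Finsupp.degree_eq_sum]

variable (K) in
open Classical in
/-- The exponents of the standard monomials of degree `d + 1` (not `d`), that is, of those that are
not congruent modulo `l * span (range x) ^ d` to a combination of smaller ones. -/
noncomputable def standardExponents (mo : MonomialOrder ι) (x : ι → A) (l : A) (d : ℕ) :
    Finset (ι →₀ ℕ) :=
  {m ∈ finsuppAntidiag univ (d + 1) | monomialValue x m ∉ lowerSpan K mo x l d m}

theorem mem_standardExponents {mo : MonomialOrder ι} {x : ι → A} {l : A} {d : ℕ} {m : ι →₀ ℕ} :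
    m ∈ standardExponents K mo x l d ↔
      m.degree = d + 1 ∧ monomialValue x m ∉ lowerSpan K mo x l d m := by
  simp only [standardExponents, mem_filter, mem_finsuppAntidiag_univ]

theorem exponentShadow_standardExponents_subset (mo : MonomialOrder ι) (x : ι → A) (l : A)
    (d : ℕ) : exponentShadow univ (standardExponents K mo x l (d + 1)) ⊆
      standardExponents K mo x l d := by
  intro k hk
  obtain ⟨i, -, hki⟩ := mem_exponentShadow.1 hk
  obtain ⟨hdeg, hstd⟩ := mem_standardExponents.1 hki
  refine mem_standardExponents.2 ⟨by simpa using hdeg, fun h => hstd ?_⟩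
  rw [monomialValue_add_single]
  exact mul_mem_lowerSpan h i

theorem card_standardExponents_succ_le {mo : MonomialOrder ι} {x : ι → A} {l : A} {d : ℕ}
    (h : #(standardExponents K mo x l d) ≤ d + 1) :
    #(standardExponents K mo x l (d + 1)) ≤ #(standardExponents K mo x l d) :=
  card_le_card_of_exponentShadow_subset
    (fun m hm => by have := (mem_standardExponents.1 hm).1; omega)
    (exponentShadow_standardExponents_subset mo x l d) h

theorem card_standardExponents_eq_zero_of_le {mo : MonomialOrder ι} {x : ι → A} {l : A} {d e : ℕ}
    (hde : d ≤ e) (h : #(standardExponents K mo x l d) = 0) :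
    #(standardExponents K mo x l e) = 0 := by
  induction e, hde using Nat.le_induction with
  | base => exact h
  | succ e _ ih => exact Nat.le_zero.1 ((card_standardExponents_succ_le (by omega)).trans ih.le)

end StandardMonomials

section MaximalGrowth

theorem finrank_span_singleton_mul {K A : Type*} [CommSemiring K] [CommSemiring A] [Algebra K A]
    {l : A} (hl : IsLeftRegular l) (P : Submodule K A) :
    Module.finrank K ↥(Submodule.span K {l} * P) = Module.finrank K P := by
  have hmap : Submodule.span K {l} * P = P.map (LinearMap.mulLeft K l) := by
    ext v
    simp [Submodule.mem_span_singleton_mul]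
  rw [hmap]
  exact (P.equivMapOfInjective (LinearMap.mulLeft K l) hl).finrank_eq.symm

variable {K A ι : Type*} [Field K] [CommRing A] [Algebra K A] [Fintype ι] [DecidableEq ι]

theorem finrank_pow_succ_eq_add_card (mo : MonomialOrder ι) {x : ι → A} {l : A}
    (hl : l ∈ Submodule.span K (Set.range x)) (hreg : IsLeftRegular l) (d : ℕ) :
    Module.finrank K ↥(Submodule.span K (Set.range x) ^ (d + 1)) =
      Module.finrank K ↥(Submodule.span K (Set.range x) ^ d) +
        #(standardExponents K mo x l d) := by
  classical
  have hfg : (Submodule.span K {l} * Submodule.span K (Set.range x) ^ d).FG :=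
    (Submodule.fg_span_singleton l).mul ((Submodule.fg_span (Set.finite_range x)).pow d)
  have : FiniteDimensional K ↥(Submodule.span K {l} * Submodule.span K (Set.range x) ^ d) :=
    Module.Finite.iff_fg.2 hfg
  have hle : Submodule.span K {l} * Submodule.span K (Set.range x) ^ d ≤
      Submodule.span K (Set.range x) ^ (d + 1) := by
    rw [pow_succ']
    exact mul_le_mul' ((Submodule.span_singleton_le_iff_mem l _).2 hl) le_rfl
  have hgreedy := finrank_sup_span_image_eq_add_card mo.toSyn.injective
    (Submodule.span K {l} * Submodule.span K (Set.range x) ^ d) (monomialValue x)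
    (finsuppAntidiag univ (d + 1))
  have hcoe : (finsuppAntidiag (univ : Finset ι) (d + 1) : Set (ι →₀ ℕ)) =
      {m | m.degree = d + 1} := by
    ext m
    exact mem_finsuppAntidiag_univ
  simp only [mem_finsuppAntidiag_univ] at hgreedy
  rwa [hcoe, ← span_range_pow_eq_span_monomialValue, sup_eq_right.2 hle,
    finrank_span_singleton_mul hreg] at hgreedy

/-- The dimension of the `d`-th power of a subspace `L` of an algebra, extended by `0` to negative
`d`: the analogue of the Hilbert function for the graded algebra `⨁ d, L ^ d`. -/
noncomputable def powHilb (L : Submodule K A) (d : ℤ) : ℤ :=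
  if d < 0 then 0 else Module.finrank K ↥(L ^ d.toNat)

/-- The first difference of `powHilb`. -/
noncomputable def powDHilb (L : Submodule K A) (d : ℤ) : ℤ :=
  powHilb L d - powHilb L (d - 1)

theorem powDHilb_natCast_add_one (L : Submodule K A) (d : ℕ) :
    powDHilb L (d + 1) = Module.finrank K ↥(L ^ (d + 1)) - Module.finrank K ↥(L ^ d) := by
  rw [powDHilb, powHilb, powHilb, if_neg (by omega), if_neg (by omega), add_sub_cancel_right,
    Int.toNat_natCast_add_one, Int.toNat_natCast]

theorem powDHilb_eq_card_standardExponents (mo : MonomialOrder ι) {x : ι → A} {l : A}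
    (hl : l ∈ Submodule.span K (Set.range x)) (hreg : IsLeftRegular l) (d : ℕ) :
    powDHilb (Submodule.span K (Set.range x)) (d + 1) = #(standardExponents K mo x l d) := by
  rw [powDHilb_natCast_add_one, finrank_pow_succ_eq_add_card mo hl hreg]
  push_cast
  ring

theorem dHilb_maximal_growth_general {L : Submodule K A} (hL : L.FG) {l : A} (hl : l ∈ L)
    (hreg : IsLeftRegular l) {j : ℤ} (hj : 0 < j) :
    (powDHilb L j ≤ j → powDHilb L (j + 1) ≤ powDHilb L j) ∧
    (powDHilb L j = 0 → ∀ i : ℤ, j ≤ i → powDHilb L i = 0) := by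
  obtain ⟨n, x, rfl⟩ := Submodule.fg_iff_exists_fin_generating_family.1 hL
  have hcard := powDHilb_eq_card_standardExponents MonomialOrder.lex hl hreg
  obtain ⟨d, rfl⟩ : ∃ d : ℕ, j = d + 1 := ⟨(j - 1).toNat, by omega⟩
  refine ⟨fun h => ?_, fun h i hi => ?_⟩
  · have hcard_succ := hcard (d + 1)
    push_cast at hcard_succ
    rw [hcard] at h
    rw [hcard_succ, hcard]
    norm_cast at h ⊢
    exact card_standardExponents_succ_le h
  · obtain ⟨e, rfl⟩ : ∃ e : ℕ, i = e + 1 := ⟨(i - 1).toNat, by omega⟩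
    rw [hcard, Nat.cast_eq_zero] at h ⊢
    exact card_standardExponents_eq_zero_of_le (by omega) h

end MaximalGrowth

section Points

variable {n : ℕ}

/-- The values at the points of `Z` of the `i`-th homogeneous coordinate. -/
noncomputable def coordValues (Z : Finset (ProjPt n)) (i : Fin (n + 1)) : { x // x ∈ Z } → ℂ :=
  fun P => (P : ProjPt n).rep i

/-- The space of values of the linear forms at the points of `Z`. -/
noncomputable def linearValues (Z : Finset (ProjPt n)) : Submodule ℂ ({ x // x ∈ Z } → ℂ) :=
  Submodule.span ℂ (Set.range (coordValues Z))

theorem linearValues_fg (Z : Finset (ProjPt n)) : (linearValues Z).FG :=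
  Submodule.fg_span (Set.finite_range _)

theorem range_evalMap (d : ℕ) (Z : Finset (ProjPt n)) :
    LinearMap.range (evalMap n d Z) = linearValues Z ^ d := by
  have haeval : evalMap n d Z =
      (aeval (coordValues Z)).toLinearMap ∘ₗ (homogeneousSubmodule (Fin (n + 1)) ℂ d).subtype := by
    ext F P
    simp [evalMap, aeval_def, eval₂_eq', coordValues, eval_eq']
  rw [haeval, LinearMap.range_comp, Submodule.range_subtype, map_aeval_homogeneousSubmodule,
    linearValues]

theorem hilb_eq_finrank_linearValues_pow (Z : Finset (ProjPt n)) (d : ℕ) :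
    hilb n Z d = Module.finrank ℂ ↥(linearValues Z ^ d) := by
  rw [hilb, range_evalMap]

theorem dHilb_eq_powDHilb (Z : Finset (ProjPt n)) (d : ℤ) :
    dHilb n Z d = powDHilb (linearValues Z) d := by
  simp only [dHilb, hilbZ, powDHilb, powHilb, hilb_eq_finrank_linearValues_pow]

theorem exists_mem_linearValues_isLeftRegular (Z : Finset (ProjPt n)) :
    ∃ l ∈ linearValues Z, IsLeftRegular l := by
  obtain ⟨φ, hφ⟩ := Module.exists_dual_forall_apply_ne_zero (K := ℂ)
    (fun P : { x // x ∈ Z } => (P : ProjPt n).rep) fun P => (P : ProjPt n).rep_nonzero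
  refine ⟨∑ i, φ (Pi.single i 1) • coordValues Z i, ?_, fun u v h => ?_⟩
  · exact Submodule.sum_mem _ fun i _ =>
      Submodule.smul_mem _ _ (Submodule.subset_span (Set.mem_range_self i))
  · have hval : ∑ i, φ (Pi.single i 1) • coordValues Z i =
        fun P : { x // x ∈ Z } => φ (P : ProjPt n).rep := by
      funext P
      conv_rhs => rw [pi_eq_sum_univ' (P : ProjPt n).rep]
      simp [coordValues, mul_comm, Pi.single]
    rw [hval] at h
    exact funext fun P => mul_left_cancel₀ (hφ P) (congr_fun h P)

end Points

/-- Macaulay's maximal growth principle: if `Dh_Z(j) ≤ j` for some `j > 0`, then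
`Dh_Z(j+1) ≤ Dh_Z(j)`.  In particular, if `Dh_Z(j) = 0` for some `j > 0`, then
`Dh_Z(i) = 0` for all `i ≥ j`. -/
theorem dHilb_maximal_growth (n : ℕ) (Z : Finset (ProjPt n)) (j : ℤ) (hj : 0 < j) :
    (dHilb n Z j ≤ j → dHilb n Z (j + 1) ≤ dHilb n Z j) ∧
    (dHilb n Z j = 0 → ∀ i : ℤ, j ≤ i → dHilb n Z i = 0) := by
  obtain ⟨l, hl, hreg⟩ := exists_mem_linearValues_isLeftRegular Z
  simpa only [dHilb_eq_powDHilb] using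
    dHilb_maximal_growth_general (linearValues_fg Z) hl hreg hj
end

section
/- If a finite set Z ⊂ ℙⁿ(ℂ) satisfies the Cayley–Bacharach property CB(i), then for every j with 0 ≤ j ≤ i+1 one has Dh_Z(0) + Dh_Z(1) + ⋯ + Dh_Z(j) ≤ Dh_Z(i+1−j) + ⋯ + Dh_Z(i+1). -/
open MvPolynomial

/-- The Cayley–Bacharach property `CB(i)`: every form of degree `i` vanishing at all points
of `Z` but one also vanishes at the remaining point. -/
def CB (n : ℕ) (Z : Finset (ProjPt n)) (i : ℕ) : Prop :=
  ∀ P ∈ Z, ∀ F : MvPolynomial (Fin (n+1)) ℂ, F.IsHomogeneous i →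
    (∀ Q ∈ Z, Q ≠ P → eval Q.rep F = 0) → eval P.rep F = 0

/-!
Let `W` be the space of value vectors on `Z` of linear forms, inside the algebra `R` of functions on
`Z`; the value vectors of forms of degree `d` make up `W ^ d`, so that `h_Z(d) = dim W ^ d`. Summing
first differences, the inequality becomes `dim W ^ a + dim W ^ b ≤ dim W ^ (a + b + 1)` for
`a + b = i`. Dividing by a linear form which vanishes nowhere on `Z`, one may assume `1 ∈ W`.

Kneser's theorem for `R` gives `dim W ^ a + dim W ^ b ≤ dim V + dim H`, where `V = W ^ (a + b)` and
`H` is the stabilizer of `V`. The property `CB(i)` says that `V` contains no nonzero ideal of `R`.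
Hence no nonzero element of `H` kills the `H`-module `V * W / V`: it would be an `x` with
`x * W ^ (i + 1) ⊆ W ^ i`, thus `x ^ k * R = x ^ k * W ^ (i + k) ⊆ W ^ i` for large `k`. As `R` has
only finitely many subalgebras, some element of `V * W / V` has annihilator zero in `H`, whence
`dim V + dim H ≤ dim V * W`.
-/

section FiniteUnions

variable {K M R κ : Type*} [Field K] [Infinite K] [Finite κ]

theorem exists_le_of_forall_exists_mem [AddCommGroup M] [Module K M] (A : Submodule K M)
    (p : κ → Submodule K M) (h : ∀ x ∈ A, ∃ k, x ∈ p k) : ∃ k, A ≤ p k := by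
  by_contra! hA
  obtain ⟨x, hx⟩ := Submodule.exists_forall_notMem_of_forall_ne_top
    (fun k => (p k).comap A.subtype) fun k => by simpa [Submodule.comap_subtype_eq_top] using hA k
  obtain ⟨k, hk⟩ := h x x.2
  exact hx k hk

-- The non-units of the Artinian ring `R` lie in finitely many proper subspaces, its maximal ideals.
theorem exists_le_of_forall_unit_mem [CommRing R] [Algebra K R] [Module.Finite K R]
    {A : Submodule K R} (hA : 1 ≤ A) (p : κ → Submodule K R)
    (h : ∀ e : Rˣ, (e : R) ∈ A → ∃ k, (e : R) ∈ p k) : ∃ k, A ≤ p k := by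
  have := IsArtinianRing.of_finite K R
  obtain ⟨k | m, hk⟩ := exists_le_of_forall_exists_mem A
      (Sum.elim p fun m : MaximalSpectrum R => m.asIdeal.restrictScalars K) fun x hx => by
    by_cases hunit : IsUnit x
    · obtain ⟨e, rfl⟩ := hunit
      obtain ⟨k, hk⟩ := h e hx
      exact ⟨.inl k, hk⟩
    · obtain ⟨m, hm, hxm⟩ := exists_max_ideal_of_mem_nonunits hunit
      exact ⟨.inr ⟨m, hm⟩, hxm⟩
  · exact ⟨k, hk⟩
  · exact absurd (hk (Submodule.one_le.1 hA)) ((Ideal.ne_top_iff_one _).1 m.isMaximal.ne_top)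

end FiniteUnions

section UnitScaling

open scoped Pointwise

variable {K G M : Type*} [Group G]

section Semiring

variable [Semiring K] [AddCommMonoid M] [Module K M] [DistribMulAction G M] [SMulCommClass G K M]

theorem mem_inv_smul_submodule_iff {g : G} {A : Submodule K M} {x : M} :
    x ∈ g⁻¹ • A ↔ g • x ∈ A :=
  Set.mem_inv_smul_set_iff (A := (A : Set M))

theorem smul_submodule_le_iff {g : G} {A B : Submodule K M} : g • A ≤ B ↔ A ≤ g⁻¹ • B :=
  Set.smul_set_subset_iff_subset_inv_smul_set (A := (A : Set M)) (B := (B : Set M))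

theorem smul_submodule_inf (g : G) (A B : Submodule K M) : g • (A ⊓ B) = g • A ⊓ g • B :=
  SetLike.coe_injective (Set.smul_set_inter (s := (A : Set M)) (t := (B : Set M)))

theorem finrank_smul_submodule (g : G) (A : Submodule K M) :
    Module.finrank K ↥(g • A) = Module.finrank K A :=
  (A.equivMapOfInjective (DistribSMul.toLinearMap K M g) (MulAction.injective g)).finrank_eq.symm

end Semiring

theorem finrank_inf_inv_smul_add_finrank_sup_smul [DivisionRing K] [AddCommGroup M] [Module K M]
    [Module.Finite K M] [DistribMulAction G M] [SMulCommClass G K M] (g : G)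
    (A B : Submodule K M) :
    Module.finrank K ↥(A ⊓ g⁻¹ • B) + Module.finrank K ↥(B ⊔ g • A) =
      Module.finrank K A + Module.finrank K B := by
  rw [← finrank_smul_submodule g (A ⊓ g⁻¹ • B), smul_submodule_inf, smul_inv_smul, inf_comm,
    add_comm, Submodule.finrank_sup_add_finrank_inf_eq, finrank_smul_submodule, add_comm]

theorem inf_inv_smul_mul_sup_smul_le {R : Type*} [CommSemiring K] [CommSemiring R] [Algebra K R]
    (e : Rˣ) (A B : Submodule K R) : (A ⊓ e⁻¹ • B) * (B ⊔ e • A) ≤ A * B := by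
  rw [Submodule.mul_sup]
  refine sup_le (mul_le_mul_left inf_le_left B) ?_
  calc (A ⊓ e⁻¹ • B) * e • A ≤ e⁻¹ • B * e • A := mul_le_mul_left inf_le_right _
    _ = A * B := by rw [smul_mul_smul_comm, inv_mul_cancel, one_smul, mul_comm]

end UnitScaling

section Stabilizer

variable {K R : Type*} [CommSemiring K] [CommSemiring R] [Algebra K R]

/-- The stabilizer `{x | x * V ⊆ V}` of a subspace `V` of an algebra, the analogue for Kneser's
theorem in algebras of the stabilizer of a subset of an abelian group. -/
def mulStabilizer (V : Submodule K R) : Subalgebra K R :=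
  (V / V).toSubalgebra (Submodule.one_mem_div.2 le_rfl) fun x y hx hy =>
    Submodule.mem_div_iff_forall_mul_mem.2 fun v hv => by
      rw [mul_assoc]
      exact Submodule.mem_div_iff_forall_mul_mem.1 hx _
        (Submodule.mem_div_iff_forall_mul_mem.1 hy v hv)

theorem mem_mulStabilizer {V : Submodule K R} {x : R} :
    x ∈ mulStabilizer V ↔ ∀ v ∈ V, x * v ∈ V :=
  Submodule.mem_div_iff_forall_mul_mem

theorem toSubmodule_le_mulStabilizer_iff {A V : Submodule K R} :
    A ≤ Subalgebra.toSubmodule (mulStabilizer V) ↔ A * V ≤ V :=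
  Submodule.le_div_iff_mul_le

theorem exists_pow_eq_top_of_adjoin_eq_top [IsNoetherian K R] {W : Submodule K R} (h1 : 1 ≤ W)
    (hgen : Algebra.adjoin K (W : Set R) = ⊤) : ∃ k, W ^ k = ⊤ := by
  obtain ⟨k, hk⟩ := monotone_stabilizes_iff_noetherian.2 ‹IsNoetherian K R›
    ⟨(W ^ ·), pow_right_mono₀ h1⟩
  have hW : W ≤ Subalgebra.toSubmodule (mulStabilizer (W ^ k)) :=
    toSubmodule_le_mulStabilizer_iff.2 ((pow_succ' W k).symm.trans (hk _ k.le_succ).symm).le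
  have htop : mulStabilizer (W ^ k) = ⊤ := top_le_iff.1 (hgen ▸ Algebra.adjoin_le hW)
  refine ⟨k, Submodule.eq_top_iff'.2 fun x => ?_⟩
  have hx : x ∈ mulStabilizer (W ^ k) := htop ▸ Algebra.mem_top
  simpa using mem_mulStabilizer.1 hx 1 (Submodule.one_le.1 (one_le_pow_of_one_le' h1 k))

theorem pow_mul_mem_pow_of_forall_mul_mem {W : Submodule K R} {d : ℕ} {x : R}
    (hx : ∀ y ∈ W ^ (d + 1), x * y ∈ W ^ d) (k : ℕ) : ∀ y ∈ W ^ (d + k), x ^ k * y ∈ W ^ d := by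
  induction k with
  | zero => simp
  | succ k ih =>
    change W ^ (d + k + 1) ≤ (W ^ d).comap (LinearMap.mulLeft K (x ^ (k + 1)))
    rw [pow_succ, Submodule.mul_le]
    intro y hy w hw
    have hyw := hx _ (pow_succ W d ▸ Submodule.mul_mem_mul (ih y hy) hw)
    rwa [← mul_assoc, ← mul_assoc, ← pow_succ', mul_assoc] at hyw

theorem eq_zero_of_forall_mul_mem_pow [IsReduced R] [IsNoetherian K R] {W : Submodule K R}
    (h1 : 1 ≤ W) (hgen : Algebra.adjoin K (W : Set R) = ⊤) {d : ℕ}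
    (hideal : ∀ x, (∀ y, x * y ∈ W ^ d) → x = 0) {x : R}
    (hx : ∀ y ∈ W ^ (d + 1), x * y ∈ W ^ d) : x = 0 := by
  obtain ⟨k, hk⟩ := exists_pow_eq_top_of_adjoin_eq_top h1 hgen
  refine eq_zero_of_pow_eq_zero (n := k) (hideal _ fun y => ?_)
  refine pow_mul_mem_pow_of_forall_mul_mem hx k y (pow_right_mono₀ h1 (Nat.le_add_left k d) ?_)
  exact hk.ge Submodule.mem_top

end Stabilizer

section Kneser

open scoped Pointwise

variable {K R : Type*} [Field K] [CommRing R] [Algebra K R] [Infinite K] [Module.Finite K R]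

-- Either every unit `e ∈ B` maps `A` into `B`, and then `V = B` works because units fill up `B`, or
-- the `e`-transform `(A ⊓ e⁻¹ • B, B ⊔ e • A)` is a pair with a smaller first member.
theorem exists_between_finrank_add_finrank_le {A B : Submodule K R} (hA : 1 ≤ A) (hB : 1 ≤ B) :
    ∃ V, B ≤ V ∧ V ≤ A * B ∧ Module.finrank K A + Module.finrank K B ≤
      Module.finrank K V + Module.finrank K (mulStabilizer V) := by
  induction A using WellFoundedLT.induction generalizing B with
  | _ A ih =>
  by_cases hunits : ∀ e : Rˣ, (e : R) ∈ B → e • A ≤ B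
  · obtain ⟨-, hBA⟩ := exists_le_of_forall_unit_mem hB (fun _ : Unit => B / A) fun e he =>
      ⟨(), Submodule.mem_div_iff_forall_mul_mem.2 fun a ha =>
        hunits e he (Submodule.smul_mem_pointwise_smul a e A ha)⟩
    have hAB : A * B ≤ B := mul_comm A B ▸ Submodule.le_div_iff_mul_le.1 hBA
    have hrank := Submodule.finrank_mono (toSubmodule_le_mulStabilizer_iff.2 hAB)
    exact ⟨B, le_rfl, le_mul_of_one_le_left' hA,
      (add_comm _ _).trans_le (Nat.add_le_add_left hrank _)⟩
  · push Not at hunits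
    obtain ⟨e, heB, heA⟩ := hunits
    have hlt : A ⊓ e⁻¹ • B < A := inf_lt_left.2 fun h => heA (smul_submodule_le_iff.2 h)
    have hone : 1 ≤ A ⊓ e⁻¹ • B := le_inf hA <| Submodule.one_le.2 <|
      mem_inv_smul_submodule_iff.2 <| by simpa [Units.smul_def] using heB
    obtain ⟨V, hBV, hV, hrank⟩ := ih _ hlt hone (hB.trans le_sup_left)
    exact ⟨V, le_sup_left.trans hBV, hV.trans (inf_inv_smul_mul_sup_smul_le e A B),
      (finrank_inf_inv_smul_add_finrank_sup_smul e A B).symm.trans_le hrank⟩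

theorem exists_subalgebra_finrank_add_finrank_le {A B : Submodule K R} (hB : 1 ≤ B) {e : Rˣ}
    (he : (e : R) ∈ A) :
    ∃ H : Subalgebra K R, (e : R) ∈ A * B / (Subalgebra.toSubmodule H * B) ∧
      Module.finrank K A + Module.finrank K B ≤
        Module.finrank K ↥(A * B) + Module.finrank K H := by
  have hone : 1 ≤ e⁻¹ • A := Submodule.one_le.2 <| mem_inv_smul_submodule_iff.2 <| by
    simpa [Units.smul_def] using he
  obtain ⟨V, hBV, hV, hrank⟩ := exists_between_finrank_add_finrank_le hone hB
  have heV : e • V ≤ A * B := smul_submodule_le_iff.2 (hV.trans_eq (smul_mul_assoc _ _ _))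
  refine ⟨mulStabilizer V, Submodule.mem_div_iff_forall_mul_mem.2 fun y hy => ?_, ?_⟩
  · have hyV : y ∈ V :=
      toSubmodule_le_mulStabilizer_iff.1 le_rfl (mul_le_mul_right hBV _ hy)
    exact heV (Submodule.smul_mem_pointwise_smul y e V hyV)
  · have hrankA : Module.finrank K ↥(e⁻¹ • A) = Module.finrank K A := finrank_smul_submodule _ A
    have hrankV : Module.finrank K V ≤ Module.finrank K ↥(A * B) :=
      (finrank_smul_submodule e V).symm.trans_le (Submodule.finrank_mono heV)
    lia

/-- The analogue of Kneser's addition theorem for subspaces of an algebra. Each unit `e ∈ A` has a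
subalgebra `H` with `e * H * B ⊆ A * B`; as there are finitely many, one `H` serves all of `A`. -/
theorem finrank_add_finrank_le_finrank_mul_add_finrank_mulStabilizer [Finite (Subalgebra K R)]
    {A B : Submodule K R} (hA : 1 ≤ A) (hB : 1 ≤ B) :
    Module.finrank K A + Module.finrank K B ≤
      Module.finrank K ↥(A * B) + Module.finrank K (mulStabilizer (A * B)) := by
  let Large := {H : Subalgebra K R // Module.finrank K A + Module.finrank K B ≤
    Module.finrank K ↥(A * B) + Module.finrank K H}
  obtain ⟨⟨H, hrank⟩, hAH⟩ := exists_le_of_forall_unit_mem hA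
      (fun H : Large => A * B / (Subalgebra.toSubmodule H.1 * B)) fun e he => by
    obtain ⟨H, heH, hrank⟩ := exists_subalgebra_finrank_add_finrank_le hB he
    exact ⟨⟨H, hrank⟩, heH⟩
  have hH : Subalgebra.toSubmodule H ≤ Subalgebra.toSubmodule (mulStabilizer (A * B)) := by
    rw [toSubmodule_le_mulStabilizer_iff, mul_left_comm]
    exact Submodule.le_div_iff_mul_le.1 hAH
  exact hrank.trans (Nat.add_le_add_left (Submodule.finrank_mono hH) _)

end Kneser

section Powers

open scoped Pointwise

variable {K R : Type*} [Field K] [CommRing R] [Algebra K R] [Infinite K]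
  [Finite (NonUnitalSubalgebra K R)]

-- For each `m` the elements `h` of the stabilizer with `h * m ∈ V` form a non-unital subalgebra.
-- There are finitely many of these, so if all were nonzero, one of them would map `U` into `V`.
theorem exists_forall_mem_mulStabilizer_eq_zero {V U : Submodule K R}
    (hfaithful : ∀ x, (∀ u ∈ U, x * u ∈ V) → x = 0) :
    ∃ m ∈ U, ∀ h ∈ mulStabilizer V, h * m ∈ V → h = 0 := by
  by_contra! hU
  obtain ⟨⟨N, x, hxN, hx0⟩, hN⟩ := exists_le_of_forall_exists_mem U
      (fun N : {N : NonUnitalSubalgebra K R // ∃ x ∈ N, x ≠ 0} => V / N.1.toSubmodule)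
      fun m hm => by
    obtain ⟨h, hhV, hhm, hh0⟩ := hU m hm
    let N : NonUnitalSubalgebra K R :=
      { Subalgebra.toSubmodule (mulStabilizer V) ⊓ V.comap (LinearMap.mulRight K m) with
        mul_mem' := fun {x y} hx hy => ⟨(mulStabilizer V).mul_mem hx.1 hy.1, by
          simpa [mul_assoc] using mem_mulStabilizer.1 hx.1 _ hy.2⟩ }
    refine ⟨⟨N, h, ⟨hhV, hhm⟩, hh0⟩, Submodule.mem_div_iff_forall_mul_mem.2 fun y hy => ?_⟩
    exact mul_comm m y ▸ hy.2
  refine hx0 (hfaithful x fun u hu => ?_)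
  exact mul_comm x u ▸ Submodule.mem_div_iff_forall_mul_mem.1 (hN hu) x hxN

variable [Module.Finite K R]

theorem finrank_add_finrank_mulStabilizer_le_finrank_mul {V W : Submodule K R} (h1 : 1 ≤ W)
    (hfaithful : ∀ x, (∀ u ∈ V * W, x * u ∈ V) → x = 0) :
    Module.finrank K V + Module.finrank K (mulStabilizer V) ≤ Module.finrank K ↥(V * W) := by
  obtain ⟨m, hm, hinj⟩ := exists_forall_mem_mulStabilizer_eq_zero hfaithful
  let H := Subalgebra.toSubmodule (mulStabilizer V)
  let g : H →ₗ[K] R := (LinearMap.mulRight K m).domRestrict H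
  have hg : Function.Injective g := (injective_iff_map_eq_zero g).2 fun h hh =>
    Subtype.ext (hinj h h.2 (Set.mem_of_eq_of_mem hh V.zero_mem))
  have hdisj : V ⊓ LinearMap.range g = ⊥ := by
    refine (Submodule.eq_bot_iff _).2 ?_
    rintro _ ⟨hV, h, rfl⟩
    rw [show h = 0 from Subtype.ext (hinj h h.2 hV), map_zero]
  have hrange : LinearMap.range g ≤ V * W := calc
    LinearMap.range g ≤ H * (V * W) := by
      rintro _ ⟨h, rfl⟩
      exact Submodule.mul_mem_mul h.2 hm
    _ ≤ V * W := by
      rw [← mul_assoc]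
      exact mul_le_mul_left (toSubmodule_le_mulStabilizer_iff.1 le_rfl) W
  calc Module.finrank K V + Module.finrank K H
      = Module.finrank K ↥(V ⊔ LinearMap.range g) := by
        rw [← LinearMap.finrank_range_of_inj hg, ← Submodule.finrank_sup_add_finrank_inf_eq, hdisj,
          finrank_bot, add_zero]
    _ ≤ Module.finrank K ↥(V * W) :=
        Submodule.finrank_mono (sup_le (le_mul_of_one_le_right' h1) hrange)

variable [IsReduced R]

theorem finrank_pow_add_finrank_pow_le {W : Submodule K R} (h1 : 1 ≤ W)
    (hgen : Algebra.adjoin K (W : Set R) = ⊤) {a b : ℕ}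
    (hideal : ∀ x, (∀ y, x * y ∈ W ^ (a + b)) → x = 0) :
    Module.finrank K ↥(W ^ a) + Module.finrank K ↥(W ^ b) ≤
      Module.finrank K ↥(W ^ (a + b + 1)) := by
  have : Finite (Subalgebra K R) := .of_injective _ Subalgebra.toNonUnitalSubalgebra_injective
  calc Module.finrank K ↥(W ^ a) + Module.finrank K ↥(W ^ b)
      ≤ Module.finrank K ↥(W ^ (a + b)) + Module.finrank K (mulStabilizer (W ^ (a + b))) := by
        rw [pow_add]
        exact finrank_add_finrank_le_finrank_mul_add_finrank_mulStabilizer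
          (one_le_pow_of_one_le' h1 a) (one_le_pow_of_one_le' h1 b)
    _ ≤ Module.finrank K ↥(W ^ (a + b + 1)) := by
        rw [pow_succ]
        refine finrank_add_finrank_mulStabilizer_le_finrank_mul h1 fun x hx => ?_
        exact eq_zero_of_forall_mul_mem_pow h1 hgen hideal (pow_succ W (a + b) ▸ hx)

theorem finrank_pow_add_finrank_pow_le_of_adjoin_inv_smul_eq_top {W : Submodule K R} {e : Rˣ}
    (he : (e : R) ∈ W) (hgen : Algebra.adjoin K (↑(e⁻¹ • W) : Set R) = ⊤) {a b : ℕ}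
    (hideal : ∀ x, (∀ y, x * y ∈ W ^ (a + b)) → x = 0) :
    Module.finrank K ↥(W ^ a) + Module.finrank K ↥(W ^ b) ≤
      Module.finrank K ↥(W ^ (a + b + 1)) := by
  have h1 : 1 ≤ e⁻¹ • W := Submodule.one_le.2 <| mem_inv_smul_submodule_iff.2 <| by
    simpa [Units.smul_def] using he
  have hrank (d : ℕ) : Module.finrank K ↥((e⁻¹ • W) ^ d) = Module.finrank K ↥(W ^ d) := by
    rw [smul_pow]
    exact finrank_smul_submodule (e⁻¹ ^ d) (W ^ d)
  simpa only [hrank] using finrank_pow_add_finrank_pow_le h1 hgen fun x hx => hideal x fun y => by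
    have hxy := hx ((e ^ (a + b))⁻¹ • y)
    rw [smul_pow, inv_pow] at hxy
    simpa only [mul_smul_comm, smul_inv_smul] using mem_inv_smul_submodule_iff.1 hxy

end Powers

section FunctionAlgebra

variable {K ι : Type*} [Field K]

theorem aeval_mem_of_coeff_zero_eq_zero {K R : Type*} [CommSemiring K] [Semiring R] [Algebra K R]
    (N : NonUnitalSubalgebra K R) {f : R} (hf : f ∈ N) {P : Polynomial K} (hP : P.coeff 0 = 0) :
    Polynomial.aeval f P ∈ N := by
  rw [Polynomial.aeval_eq_sum_range]
  have hpow (k : ℕ) : f ^ (k + 1) ∈ N := by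
    induction k with
    | zero => simpa
    | succ k ih => exact pow_succ f (k + 1) ▸ mul_mem ih hf
  refine sum_mem fun k _ => ?_
  cases k with
  | zero => simp [hP]
  | succ k => exact SMulMemClass.smul_mem _ (hpow k)

variable [Finite ι]

open Polynomial in
theorem mem_span_isIdempotentElem (N : NonUnitalSubalgebra K (ι → K)) {f : ι → K} (hf : f ∈ N) :
    f ∈ Submodule.span K {e | e ∈ N ∧ IsIdempotentElem e} := by
  classical
  let S := insert 0 (Set.finite_range f).toFinset
  have hfS (x : ι) : f x ∈ S := by simp [S]
  let e (c : K) := aeval f (Lagrange.basis S id c)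
  have he {c : K} (hc : c ∈ S) (x : ι) : e c x = if f x = c then 1 else 0 := by
    rw [show e c x = (Lagrange.basis S id c).eval (f x) from aeval_fn_apply _ f x]
    split_ifs with hx
    · exact hx ▸ Lagrange.eval_basis_self Function.injective_id.injOn (hx ▸ hc)
    · exact Lagrange.eval_basis_of_ne (v := id) (Ne.symm hx) (hfS x)
  have hf_sum : f = ∑ c ∈ S, c • e c := by
    ext x
    rw [Finset.sum_apply, Finset.sum_congr rfl fun c hc => by rw [Pi.smul_apply, he hc]]
    simp [hfS]
  rw [hf_sum]
  refine sum_mem fun c hc => ?_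
  obtain rfl | hc0 := eq_or_ne c 0
  · simp
  refine Submodule.smul_mem _ _ (Submodule.subset_span ⟨?_, ?_⟩)
  · refine aeval_mem_of_coeff_zero_eq_zero N hf ?_
    rw [coeff_zero_eq_eval_zero]
    exact Lagrange.eval_basis_of_ne (v := id) hc0 (Finset.mem_insert_self _ _)
  · ext x
    simp [he hc]

theorem span_isIdempotentElem (N : NonUnitalSubalgebra K (ι → K)) :
    Submodule.span K {e | e ∈ N ∧ IsIdempotentElem e} = N.toSubmodule :=
  le_antisymm (Submodule.span_le.2 fun _ he => he.1) fun _ => mem_span_isIdempotentElem N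

instance finite_nonUnitalSubalgebra_pi : Finite (NonUnitalSubalgebra K (ι → K)) := by
  have hfin : {e : ι → K | IsIdempotentElem e}.Finite :=
    (Set.Finite.pi' fun _ => Set.toFinite {0, 1}).subset fun e he x =>
      IsIdempotentElem.iff_eq_zero_or_one.1 (congr_fun he x)
  have := hfin.powerset.to_subtype
  refine .of_injective
    (fun N => (⟨{e | e ∈ N ∧ IsIdempotentElem e}, fun _ he => he.2⟩ :
      𝒫 {e : ι → K | IsIdempotentElem e})) fun N N' h => ?_
  refine NonUnitalSubalgebra.toSubmodule_injective ?_
  rw [← span_isIdempotentElem N, ← span_isIdempotentElem N']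
  exact congr_arg (Submodule.span K) (Subtype.ext_iff.1 h)

theorem subalgebra_pi_eq_top_of_separates (H : Subalgebra K (ι → K))
    (hsep : ∀ x y, (∀ f ∈ H, f x = f y) → x = y) : H = ⊤ := by
  classical
  have := Fintype.ofFinite ι
  by_contra hH
  obtain ⟨φ, hφ0, hφ⟩ := Submodule.exists_le_ker_of_lt_top (Subalgebra.toSubmodule H) <|
    lt_top_iff_ne_top.2 <| by simpa using hH
  let ev (x : ι) : H →ₐ[K] K := (Pi.evalAlgHom K (fun _ => K) x).comp H.val
  have hev : Function.Injective ev := fun x y hxy =>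
    hsep x y fun f hf => DFunLike.congr_fun hxy ⟨f, hf⟩
  have hindep := (linearIndependent_algHom_toLinearMap K H K).comp ev hev
  refine hφ0 (LinearMap.pi_ext' fun x => LinearMap.ext_ring ?_)
  refine Fintype.linearIndependent_iff.1 hindep (fun x => φ (Pi.single x 1)) ?_ x
  ext f
  have hf := hφ f.2
  rw [LinearMap.mem_ker, pi_eq_sum_univ' f.1, map_sum] at hf
  simpa [ev, mul_comm] using hf

end FunctionAlgebra

section HilbertFunction

variable {K σ ι : Type*} [Field K]

/-- The value vectors, on the family `v` of coordinate vectors, of the forms of degree `d`. -/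
noncomputable def formValues (v : ι → σ → K) (d : ℕ) : Submodule K (ι → K) :=
  (homogeneousSubmodule σ K d).map (AlgHom.pi fun x => aeval (v x)).toLinearMap

/-- The Hilbert function of the points with coordinate vectors `v`. -/
noncomputable def hilbertFunction (v : ι → σ → K) (d : ℕ) : ℕ :=
  Module.finrank K (formValues v d)

/-- The first difference of the Hilbert function, with value `h(0)` in degree `0`. -/
noncomputable def hilbertDiff (v : ι → σ → K) : ℕ → ℤ
  | 0 => hilbertFunction v 0
  | d + 1 => hilbertFunction v (d + 1) - hilbertFunction v d

/-- The Cayley–Bacharach property `CB(i)` of the points with coordinate vectors `v`. -/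
def CayleyBacharach (v : ι → σ → K) (i : ℕ) : Prop :=
  ∀ x, ∀ F : MvPolynomial σ K, F.IsHomogeneous i → (∀ y ≠ x, eval (v y) F = 0) → eval (v x) F = 0

variable {v : ι → σ → K}

theorem mem_formValues {d : ℕ} {f : ι → K} :
    f ∈ formValues v d ↔
      ∃ F : MvPolynomial σ K, F.IsHomogeneous d ∧ (fun x => eval (v x) F) = f :=
  Iff.rfl

theorem formValues_one_pow (v : ι → σ → K) (d : ℕ) : formValues v 1 ^ d = formValues v d := by
  rw [formValues, ← Submodule.map_pow, homogeneousSubmodule_one_pow, formValues]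

theorem coordinate_mem_formValues_one (v : ι → σ → K) (k : σ) :
    (fun x => v x k) ∈ formValues v 1 :=
  mem_formValues.2 ⟨X k, isHomogeneous_X K k, by simp⟩

theorem exists_unit_mem_formValues_one [Infinite K] [Finite ι] (hv : ∀ x, v x ≠ 0) :
    ∃ e : (ι → K)ˣ, (e : ι → K) ∈ formValues v 1 := by
  obtain ⟨f, hf, hf0⟩ := Module.Dual.exists_forall_mem_ne_zero_of_forall_exists (formValues v 1)
    (fun x => LinearMap.proj x) fun x => by
      obtain ⟨k, hk⟩ := Function.ne_iff.1 (hv x)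
      exact ⟨_, coordinate_mem_formValues_one v k, hk⟩
  have hunit : IsUnit f := Pi.isUnit_iff.2 fun x => (hf0 x).isUnit
  exact ⟨hunit.unit, hf⟩

open scoped Pointwise in
theorem adjoin_inv_smul_formValues_one_eq_top [Finite ι] (hv : ∀ x, v x ≠ 0)
    (hinj : Function.Injective fun x => Projectivization.mk K (v x) (hv x)) (e : (ι → K)ˣ) :
    Algebra.adjoin K (↑(e⁻¹ • formValues v 1) : Set (ι → K)) = ⊤ := by
  refine subalgebra_pi_eq_top_of_separates _ fun x y hxy => hinj ?_
  refine (Projectivization.mk_eq_mk_iff' ..).2 ⟨e.1 x * e⁻¹.1 y, funext fun k => ?_⟩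
  have hk : e⁻¹.1 x * v x k = e⁻¹.1 y * v y k := hxy _ <| Algebra.subset_adjoin <|
    Submodule.smul_mem_pointwise_smul _ e⁻¹ _ (coordinate_mem_formValues_one v k)
  have hex : e.1 x * e⁻¹.1 x = 1 := congr_fun e.mul_inv x
  rw [Pi.smul_apply, smul_eq_mul, mul_assoc, ← hk, ← mul_assoc, hex, one_mul]

theorem CayleyBacharach.eq_zero_of_forall_mul_mem {i : ℕ} (hCB : CayleyBacharach v i) {f : ι → K}
    (hf : ∀ g, f * g ∈ formValues v i) : f = 0 := by
  classical
  ext x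
  obtain ⟨F, hF, hFx⟩ := mem_formValues.1 (hf (Pi.single x 1))
  have heval (y : ι) : eval (v y) F = f y * (Pi.single x 1 : ι → K) y := congr_fun hFx y
  simpa [heval] using hCB x F hF fun y hy => by simp [heval, hy]

theorem CayleyBacharach.hilbertFunction_add_le [Infinite K] [Finite ι] {a b : ℕ}
    (hCB : CayleyBacharach v (a + b)) (hv : ∀ x, v x ≠ 0)
    (hinj : Function.Injective fun x => Projectivization.mk K (v x) (hv x)) :
    hilbertFunction v a + hilbertFunction v b ≤ hilbertFunction v (a + b + 1) := by
  obtain ⟨e, he⟩ := exists_unit_mem_formValues_one hv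
  have hrank (d : ℕ) : hilbertFunction v d = Module.finrank K ↥(formValues v 1 ^ d) := by
    rw [formValues_one_pow, hilbertFunction]
  rw [hrank, hrank, hrank]
  exact finrank_pow_add_finrank_pow_le_of_adjoin_inv_smul_eq_top he
    (adjoin_inv_smul_formValues_one_eq_top hv hinj e) fun f hf =>
      hCB.eq_zero_of_forall_mul_mem (formValues_one_pow v (a + b) ▸ hf)

theorem sum_range_hilbertDiff (v : ι → σ → K) (d : ℕ) :
    ∑ t ∈ Finset.range (d + 1), hilbertDiff v t = hilbertFunction v d := by
  induction d with
  | zero => simp [hilbertDiff]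
  | succ d ih => rw [Finset.sum_range_succ, ih, hilbertDiff, add_sub_cancel]

theorem cb_dHilb_inequality_general [Infinite K] [Finite ι] (hv : ∀ x, v x ≠ 0)
    (hinj : Function.Injective fun x => Projectivization.mk K (v x) (hv x)) {i : ℕ}
    (hCB : CayleyBacharach v i) {j : ℕ} (hj : j ≤ i + 1) :
    ∑ t ∈ Finset.range (j + 1), hilbertDiff v t ≤
      ∑ t ∈ Finset.range (j + 1), hilbertDiff v (i + 1 - j + t) := by
  obtain ⟨k, hk⟩ := Nat.exists_eq_add_of_le hj
  rw [hk, Nat.add_sub_cancel_left]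
  cases k with
  | zero => simp
  | succ k =>
    obtain rfl : i = j + k := Nat.succ.inj hk
    have hsum := Finset.sum_range_add (hilbertDiff v) (k + 1) (j + 1)
    rw [← add_assoc, sum_range_hilbertDiff, sum_range_hilbertDiff, add_right_comm, add_comm k]
      at hsum
    have hadd := hCB.hilbertFunction_add_le hv hinj
    rw [sum_range_hilbertDiff]
    lia

end HilbertFunction

section ProjectiveSpace

variable (n : ℕ) (Z : Finset (ProjPt n))

theorem hilb_eq_hilbertFunction (d : ℕ) :
    hilb n Z d = hilbertFunction (fun P : Z => P.1.rep) d := by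
  have hrange : LinearMap.range (evalMap n d Z) = formValues (fun P : Z => P.1.rep) d := by
    ext f
    simp [mem_formValues, evalMap]
  rw [hilb, hrange, hilbertFunction]

theorem dHilb_eq_hilbertDiff (d : ℕ) : dHilb n Z d = hilbertDiff (fun P : Z => P.1.rep) d := by
  cases d with
  | zero => simp [dHilb, hilbZ, hilbertDiff, hilb_eq_hilbertFunction]
  | succ d =>
    have h : ¬ (d : ℤ) + 1 < 0 := by lia
    simp [dHilb, hilbZ, hilbertDiff, hilb_eq_hilbertFunction, h]

end ProjectiveSpace

/-- If a finite set `Z ⊂ ℙⁿ(ℂ)` satisfies `CB(i)`, then for every `0 ≤ j ≤ i+1`: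
`Dh_Z(0) + ⋯ + Dh_Z(j) ≤ Dh_Z(i+1-j) + ⋯ + Dh_Z(i+1)`. -/
theorem cb_dHilb_inequality (n : ℕ) (Z : Finset (ProjPt n)) (i : ℕ) (hCB : CB n Z i)
    (j : ℕ) (hj : j ≤ i + 1) :
    ∑ t ∈ Finset.range (j + 1), dHilb n Z (t : ℤ) ≤
      ∑ t ∈ Finset.range (j + 1), dHilb n Z ((i + 1 - j + t : ℕ) : ℤ) := by
  simp only [dHilb_eq_hilbertDiff]
  exact cb_dHilb_inequality_general (fun P : Z => P.1.rep_nonzero)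
    (by simpa only [Projectivization.mk_rep] using Subtype.val_injective)
    (fun P F hF hFQ => hCB P P.2 F hF fun Q hQ hQP => hFQ ⟨Q, hQ⟩ (by simpa [Subtype.ext_iff])) hj
end

section
/- Let Z ⊂ ℙⁿ(ℂ) be a finite set with Kruskal rank k. If ℓ(Z) ≤ 2k − 1, then Z is separated by forms of degree 2, i.e. h_Z(2) = ℓ(Z); equivalently, for every point P ∈ Z there is a quadric (homogeneous polynomial of degree 2) vanishing at all points of Z∖{P} and not vanishing at P. -/
open MvPolynomial

/-- The Kruskal rank of a finite set `Z ⊂ ℙⁿ(ℂ)`: the maximum `k` (necessarily `≤ ℓ(Z)`)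
such that every subset of `Z` of cardinality `≤ k` is linearly independent. -/
noncomputable def kruskalRank (n : ℕ) (Z : Finset (ProjPt n)) : ℕ :=
  sSup {k | k ≤ Z.card ∧ ∀ S ⊆ Z, S.card ≤ k →
    LinearIndependent ℂ (fun P : { x // x ∈ S } => (P : ProjPt n).rep)}

/-! Through any `k - 1` points of `Z` other than `P` there passes a hyperplane missing `P`, because
these points together with `P` are linearly independent. If `ℓ(Z) ≤ d (k - 1) + 1`, then `Z ∖ {P}`
splits into `d` sets of at most `k - 1` points, and the product of the `d` corresponding linear forms
is a form of degree `d` that vanishes on `Z ∖ {P}` and not at `P`. -/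

theorem exists_isHomogeneous_one_forall_eval_eq {R σ : Type*} [CommRing R] [Finite σ]
    (f : Module.Dual R (σ → R)) :
    ∃ F : MvPolynomial σ R, F.IsHomogeneous 1 ∧ ∀ x, eval x F = f x := by
  classical
  have := Fintype.ofFinite σ
  let M : Matrix Unit σ R := LinearMap.toMatrix' (LinearMap.pi fun _ => f)
  refine ⟨M.toMvPolynomial (), M.toMvPolynomial_isHomogeneous (), fun x => ?_⟩
  rw [Matrix.toMvPolynomial_eval_eq_apply, LinearMap.toMatrix'_mulVec, LinearMap.pi_apply]

/-- Separation by forms, as in "`Z` is separated by forms of degree `d`", for one index `i` of a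
family of coordinate vectors `v` and a set `S` of other indices. Working with families rather than
sets of points lets the same notion apply to representatives of projective points. -/
def SeparatedByForm {R ι σ : Type*} [CommSemiring R] (v : ι → σ → R) (d : ℕ) (i : ι)
    (S : Set ι) : Prop :=
  ∃ F : MvPolynomial σ R, F.IsHomogeneous d ∧ (∀ j ∈ S, eval (v j) F = 0) ∧ eval (v i) F ≠ 0

namespace SeparatedByForm

section Semiring

variable {R ι σ : Type*} [CommSemiring R] {v : ι → σ → R} {i : ι}

theorem empty [Nontrivial R] : SeparatedByForm v 0 i ∅ :=
  ⟨1, isHomogeneous_one σ R, by simp, by simp⟩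

theorem union [NoZeroDivisors R] {d e : ℕ} {S T : Set ι}
    (hS : SeparatedByForm v d i S) (hT : SeparatedByForm v e i T) :
    SeparatedByForm v (d + e) i (S ∪ T) := by
  obtain ⟨F, hF, hFS, hFi⟩ := hS
  obtain ⟨G, hG, hGT, hGi⟩ := hT
  refine ⟨F * G, hF.mul hG, fun j hj => ?_, ?_⟩
  · rw [map_mul]
    rcases hj with hjS | hjT
    · rw [hFS j hjS, zero_mul]
    · rw [hGT j hjT, mul_zero]
  · rw [map_mul]
    exact mul_ne_zero hFi hGi

theorem of_card_le_mul [Nontrivial R] [NoZeroDivisors R] {e m : ℕ} (d : ℕ) {T : Finset ι}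
    (hT : T.card ≤ d * m) (hsep : ∀ S ⊆ T, S.card ≤ m → SeparatedByForm v e i S) :
    SeparatedByForm v (d * e) i T := by
  classical
  induction d generalizing T with
  | zero =>
    obtain rfl : T = ∅ := by simpa using hT
    simpa using empty
  | succ d ih =>
    obtain ⟨A, hAT, hA⟩ := Finset.exists_subset_card_eq (min_le_right m T.card)
    have hrest : (T \ A).card ≤ d * m := by
      rw [Finset.card_sdiff_of_subset hAT, hA]
      rw [Nat.succ_mul] at hT
      omega
    have hsepRest := ih hrest fun S hS => hsep S (hS.trans Finset.sdiff_subset)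
    have hsepA := hsep A hAT (hA.trans_le (min_le_left _ _))
    rw [Nat.succ_mul, ← Finset.sdiff_union_of_subset hAT, Finset.coe_union]
    exact hsepRest.union hsepA

end Semiring

section Field

variable {K ι σ : Type*} [Field K] [Finite σ] {v : ι → σ → K} {i : ι}

theorem of_notMem_span {S : Set ι} (h : v i ∉ Submodule.span K (v '' S)) :
    SeparatedByForm v 1 i S := by
  obtain ⟨f, hfi, hfS⟩ := Submodule.exists_le_ker_of_notMem h
  obtain ⟨F, hF, hFf⟩ := exists_isHomogeneous_one_forall_eval_eq f
  refine ⟨F, hF, fun j hj => ?_, ?_⟩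
  · rw [hFf]
    exact hfS (Submodule.subset_span (Set.mem_image_of_mem v hj))
  · rwa [hFf]

theorem of_linearIndepOn {k d : ℕ} {Z : Finset ι} (hi : i ∈ Z) (hZ : Z.card ≤ d * k + 1)
    (hli : ∀ S ⊆ Z, S.card ≤ k + 1 → LinearIndepOn K v (S : Set ι)) :
    SeparatedByForm v d i ((Z : Set ι) \ {i}) := by
  classical
  have hcard : (Z.erase i).card ≤ d * k := by
    rw [Finset.card_erase_of_mem hi]
    omega
  have hlinear : ∀ S ⊆ Z.erase i, S.card ≤ k → SeparatedByForm v 1 i S := fun S hS hSk => by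
    have hiS : i ∉ S := fun h => Finset.notMem_erase i Z (hS h)
    have hinsert := hli (insert i S)
      (Finset.insert_subset hi (hS.trans (Finset.erase_subset i Z)))
      (by rw [Finset.card_insert_of_notMem hiS]; omega)
    rw [Finset.coe_insert, linearIndepOn_insert (Finset.mem_coe.not.mpr hiS)] at hinsert
    exact of_notMem_span hinsert.2
  simpa only [mul_one, Finset.coe_erase] using of_card_le_mul d hcard hlinear

end Field

end SeparatedByForm

theorem range_eq_top_iff_forall_exists_apply_ne_zero {K M ι : Type*} [DivisionRing K]
    [AddCommGroup M] [Module K M] [Finite ι] (f : M →ₗ[K] ι → K) :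
    LinearMap.range f = ⊤ ↔ ∀ i, ∃ m, (∀ j, j ≠ i → f m j = 0) ∧ f m i ≠ 0 := by
  classical
  refine ⟨fun hf i => ?_, fun hsep => ?_⟩
  · obtain ⟨m, hm⟩ := LinearMap.range_eq_top.mp hf (Pi.single i 1)
    exact ⟨m, fun j hj => by rw [hm, Pi.single_eq_of_ne hj], by simp [hm]⟩
  · rw [eq_top_iff, ← (Pi.basisFun K ι).span_eq, Submodule.span_le]
    rintro _ ⟨i, rfl⟩
    obtain ⟨m, hmj, hmi⟩ := hsep i
    refine ⟨(f m i)⁻¹ • m, funext fun j => ?_⟩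
    rw [map_smul, Pi.smul_apply, smul_eq_mul, Pi.basisFun_apply]
    obtain rfl | hj := eq_or_ne j i
    · rw [inv_mul_cancel₀ hmi, Pi.single_eq_same]
    · rw [hmj j hj, mul_zero, Pi.single_eq_of_ne hj]

theorem hilb_eq_card_iff (n d : ℕ) (Z : Finset (ProjPt n)) :
    hilb n Z d = Z.card ↔
      ∀ P ∈ Z, SeparatedByForm Projectivization.rep d P ((Z : Set (ProjPt n)) \ {P}) := by
  have hrange : hilb n Z d = Z.card ↔ LinearMap.range (evalMap n d Z) = ⊤ := by
    have hfinrank : Module.finrank ℂ ({P // P ∈ Z} → ℂ) = Z.card := by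
      rw [Module.finrank_fintype_fun_eq_card, Fintype.card_coe]
    rw [hilb, ← hfinrank]
    exact ⟨Submodule.eq_top_of_finrank_eq, fun h => by rw [h, finrank_top]⟩
  rw [hrange, range_eq_top_iff_forall_exists_apply_ne_zero]
  simp [SeparatedByForm, evalMap, and_left_comm]

theorem isGreatest_kruskalRank (n : ℕ) (Z : Finset (ProjPt n)) :
    IsGreatest {k | k ≤ Z.card ∧ ∀ S ⊆ Z, S.card ≤ k →
      LinearIndepOn ℂ Projectivization.rep (S : Set (ProjPt n))} (kruskalRank n Z) := by
  have hbdd : BddAbove {k | k ≤ Z.card ∧ ∀ S ⊆ Z, S.card ≤ k →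
      LinearIndepOn ℂ Projectivization.rep (S : Set (ProjPt n))} := ⟨Z.card, fun _ hk => hk.1⟩
  refine ⟨Nat.sSup_mem ⟨0, Nat.zero_le _, fun S _ hS => ?_⟩ hbdd, fun _ hk => le_csSup hbdd hk⟩
  obtain rfl : S = ∅ := by simpa using hS
  simp

theorem kruskalRank_pos {n : ℕ} {Z : Finset (ProjPt n)} (hZ : Z.Nonempty) :
    0 < kruskalRank n Z := by
  refine (isGreatest_kruskalRank n Z).2 ⟨hZ.card_pos, fun S _ hS => ?_⟩
  obtain hS | ⟨P, hS⟩ := (Finset.card_le_one_iff_subsingleton.mp hS).eq_empty_or_singleton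
  · simp [hS]
  · rw [hS]
    exact .singleton P.rep_nonzero

/-- The subtraction in `hcard` truncates only for `Z = ∅`: see `kruskalRank_pos`. -/
theorem separated_by_quadrics_of_card_le_general (n d : ℕ) (Z : Finset (ProjPt n))
    (hcard : Z.card ≤ d * (kruskalRank n Z - 1) + 1) :
    hilb n Z d = Z.card ∧
    ∀ P ∈ Z, ∃ F : MvPolynomial (Fin (n+1)) ℂ, F.IsHomogeneous d ∧
      (∀ Q ∈ Z, Q ≠ P → eval Q.rep F = 0) ∧ eval P.rep F ≠ 0 := by
  have hsep : ∀ P ∈ Z,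
      SeparatedByForm Projectivization.rep d P ((Z : Set (ProjPt n)) \ {P}) := fun P hP =>
    have hpos := kruskalRank_pos ⟨P, hP⟩
    .of_linearIndepOn hP hcard fun S hS hSk =>
      (isGreatest_kruskalRank n Z).1.2 S hS (by omega)
  refine ⟨(hilb_eq_card_iff n d Z).mpr hsep, fun P hP => ?_⟩
  obtain ⟨F, hF, hFZ, hFP⟩ := hsep P hP
  exact ⟨F, hF, fun Q hQ hQP => hFZ Q ⟨hQ, hQP⟩, hFP⟩

/-- If `Z ⊂ ℙⁿ(ℂ)` has Kruskal rank `k` and `ℓ(Z) ≤ 2k - 1`, then `Z` is separated by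
forms of degree `2`: `h_Z(2) = ℓ(Z)`, and for every `P ∈ Z` there is a quadric vanishing
at all points of `Z ∖ {P}` and not at `P`. -/
theorem separated_by_quadrics_of_card_le (n : ℕ) (Z : Finset (ProjPt n))
    (hcard : Z.card ≤ 2 * kruskalRank n Z - 1) :
    hilb n Z 2 = Z.card ∧
    ∀ P ∈ Z, ∃ F : MvPolynomial (Fin (n+1)) ℂ, F.IsHomogeneous 2 ∧
      (∀ Q ∈ Z, Q ≠ P → eval Q.rep F = 0) ∧ eval P.rep F ≠ 0 :=
  separated_by_quadrics_of_card_le_general n 2 Z (by omega)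
end

section
/- Let T ∈ ℙ(Symᵈ(ℂⁿ⁺¹)) and let A, B ⊂ ℙⁿ be two different minimal decompositions of T. Then the set Z = A ∪ B satisfies h_Z(d) < ℓ(Z), and consequently Dh_Z(d+1) > 0. -/
/-!
Apolarity turns a form `F` of degree `d` into a linear functional taking each `d`-th power `L_vᵈ`
to `F(v)`. So if evaluation in degree `d` were onto `K^Z`, the powers at the points of `Z = A ∪ B`
would have dual functionals, hence be linearly independent; then `T` would lie in the span of the
powers at `A ∩ B`, and minimality would force `A = A ∩ B = B`.

For the second claim, let `W_d ⊆ K^Z` be the image of evaluation in degree `d`, and choose a linear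
form `l` with no zero on `Z`. If `dim W_{d+1} ≤ dim W_d`, then `l W_d = W_{d+1}`, so `W_d` is stable
under multiplication by `m / l` for every linear form `m`. These quotients separate the points
of `Z`, so `W_d` contains every coordinate vector: evaluation in degree `d` is already onto.
-/

open MvPolynomial

/-- `A ⊂ ℙⁿ` is a decomposition of (the class of) `T ∈ Symᵈ(ℂⁿ⁺¹)` if `T` belongs to the
linear span of the `d`-th powers `L_Pᵈ` of coordinate linear forms of the points `P ∈ A`,
i.e. the class of `T` lies in the projective span `⟨ν_d(A)⟩`. -/
def IsDecomp (n d : ℕ) (T : MvPolynomial (Fin (n+1)) ℂ) (A : Finset (ProjPt n)) : Prop :=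
  T ∈ Submodule.span ℂ ((fun P : ProjPt n => (linForm n P.rep) ^ d) '' (A : Set (ProjPt n)))

/-- A decomposition is minimal if no proper subset is a decomposition. -/
def IsMinimalDecomp (n d : ℕ) (T : MvPolynomial (Fin (n+1)) ℂ)
    (A : Finset (ProjPt n)) : Prop :=
  IsDecomp n d T A ∧ ∀ A' ⊂ A, ¬ IsDecomp n d T A'

section FunctionSpaces

variable {ι K : Type*} [Finite ι] [Field K]

theorem eq_top_of_separating_multipliers {W : Submodule K (ι → K)}
    (hne : ∀ i, ∃ w ∈ W, w i ≠ 0)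
    (hsep : Pairwise fun i j => ∃ m : ι → K, (∀ w ∈ W, m * w ∈ W) ∧ m i ≠ 0 ∧ m j = 0) :
    W = ⊤ := by
  classical
  have := Fintype.ofFinite ι
  have single_mem (i : ι) : Pi.single i 1 ∈ W := by
    obtain ⟨w, hw, hwi⟩ := hne i
    choose! m hmW hmi hmj using fun j (hij : i ≠ j) => hsep hij
    set e : ι → K := (∏ j ∈ Finset.univ.erase i, m j) * w with he
    have e_mem : e ∈ W :=
      Finset.prod_induction m (fun f => ∀ w ∈ W, f * w ∈ W)
        (fun f g hf hg w hw => by rw [mul_assoc]; exact hf _ (hg w hw))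
        (fun w hw => by rwa [one_mul])
        (fun j hj => hmW j (Finset.ne_of_mem_erase hj).symm) w hw
    have e_apply_self : e i ≠ 0 := by
      rw [he, Pi.mul_apply, Finset.prod_apply]
      exact mul_ne_zero
        (Finset.prod_ne_zero_iff.mpr fun j hj => hmi j (Finset.ne_of_mem_erase hj).symm) hwi
    have e_apply_of_ne (j : ι) (hij : i ≠ j) : e j = 0 := by
      rw [he, Pi.mul_apply, Finset.prod_apply]
      have hj : j ∈ Finset.univ.erase i := Finset.mem_erase.mpr ⟨hij.symm, Finset.mem_univ j⟩
      exact mul_eq_zero_of_left (Finset.prod_eq_zero (f := fun k => m k j) hj (hmj j hij)) (w j)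
    have single_eq : Pi.single i 1 = (e i)⁻¹ • e := by
      ext j
      obtain rfl | hij := eq_or_ne i j
      · simp [e_apply_self]
      · simp [hij.symm, e_apply_of_ne j hij]
    exact single_eq ▸ W.smul_mem _ e_mem
  rw [eq_top_iff, ← (Pi.basisFun K ι).span_eq, Submodule.span_le]
  rintro _ ⟨i, rfl⟩
  rw [Pi.basisFun_apply]
  exact single_mem i

theorem div_mul_mem_of_finrank_le {W W' : Submodule K (ι → K)} {l m : ι → K}
    (hl : ∀ i, l i ≠ 0) (hlW : ∀ w ∈ W, l * w ∈ W') (hmW : ∀ w ∈ W, m * w ∈ W')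
    (hle : Module.finrank K W' ≤ Module.finrank K W) {w : ι → K} (hw : w ∈ W) :
    m / l * w ∈ W := by
  have hl_unit : IsUnit l := Pi.isUnit_iff.mpr fun i => (hl i).isUnit
  have hinj : Function.Injective (LinearMap.mulLeft K l) := hl_unit.mul_right_injective
  have hmap : W.map (LinearMap.mulLeft K l) = W' :=
    Submodule.eq_of_le_of_finrank_le (Submodule.map_le_iff_le_comap.mpr hlW)
      (hle.trans_eq (W.equivMapOfInjective _ hinj).finrank_eq)
  obtain ⟨u, hu, hlu : l * u = m * w⟩ := hmap.symm ▸ hmW w hw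
  have hu_eq : u = m / l * w := by
    ext i
    have hlui : l i * u i = m i * w i := congrFun hlu i
    rw [Pi.mul_apply, Pi.div_apply, div_mul_eq_mul_div, eq_div_iff (hl i), ← hlui, mul_comm]
  exact hu_eq ▸ hu

end FunctionSpaces

theorem mem_span_image_inter_of_linearIndepOn {ι R M : Type*} [Semiring R] [AddCommMonoid M]
    [Module R M] {f : ι → M} {s t : Set ι} (hf : LinearIndepOn R f (s ∪ t)) {x : M}
    (hs : x ∈ Submodule.span R (f '' s)) (ht : x ∈ Submodule.span R (f '' t)) :
    x ∈ Submodule.span R (f '' (s ∩ t)) := by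
  rw [Finsupp.mem_span_image_iff_linearCombination] at hs ht ⊢
  obtain ⟨a, ha, rfl⟩ := hs
  obtain ⟨b, hb, hba⟩ := ht
  obtain rfl : b = a := linearIndepOn_iffₛ.mp hf
    b (Finsupp.supported_mono Set.subset_union_right hb)
    a (Finsupp.supported_mono Set.subset_union_left ha) hba
  exact ⟨b, Set.subset_inter ha hb, rfl⟩

section LinearForms

variable {ι σ R : Type*} [CommSemiring R]

/-- Evaluation of the forms of degree `d` at a family of coordinate vectors; its rank is the value
in degree `d` of the Hilbert function of the corresponding points. -/
noncomputable def evalForms (v : ι → σ → R) (d : ℕ) :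
    homogeneousSubmodule σ R d →ₗ[R] (ι → R) where
  toFun F := fun i => eval (v i) (F : MvPolynomial σ R)
  map_add' F G := by ext; simp
  map_smul' c F := by ext; simp

theorem evalForms_apply (v : ι → σ → R) {d : ℕ} (F : homogeneousSubmodule σ R d) (i : ι) :
    evalForms v d F i = eval (v i) (F : MvPolynomial σ R) :=
  rfl

variable [Fintype σ]

/-- The linear form with a given coefficient vector, over any semiring and in any finite set of
variables; on `ℂⁿ⁺¹` it is `linForm` by definition. -/
noncomputable def linearForm (a : σ → R) : MvPolynomial σ R :=
  ∑ j, C (a j) * X j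

theorem isHomogeneous_linearForm (a : σ → R) : (linearForm a).IsHomogeneous 1 :=
  IsHomogeneous.sum _ _ _ fun j _ => isHomogeneous_C_mul_X (a j) j

theorem eval_linearForm (a v : σ → R) : eval v (linearForm a) = a ⬝ᵥ v := by
  simp [linearForm, dotProduct]

theorem exists_eval_linearForm_eq (f : Module.Dual R (σ → R)) :
    ∃ a, ∀ v, eval v (linearForm a) = f v := by
  classical
  exact ⟨(dotProductEquiv R σ).symm f, fun v => by
    rw [eval_linearForm]
    exact LinearMap.congr_fun ((dotProductEquiv R σ).apply_symm_apply f) v⟩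

theorem eval_linearForm_mul_mem_range_evalForms (v : ι → σ → R) {d : ℕ} (a : σ → R)
    {w : ι → R} (hw : w ∈ LinearMap.range (evalForms v d)) :
    (fun i => eval (v i) (linearForm a)) * w ∈ LinearMap.range (evalForms v (d + 1)) := by
  obtain ⟨F, rfl⟩ := hw
  refine ⟨⟨linearForm a * F, ?_⟩, funext fun i => ?_⟩
  · rw [mem_homogeneousSubmodule, add_comm d]
    exact (isHomogeneous_linearForm a).mul F.2
  · simp only [evalForms_apply, map_mul, Pi.mul_apply]

end LinearForms

section Separation

variable {ι σ K : Type*} [Field K] [Fintype σ]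

theorem exists_linearForm_forall_eval_ne_zero [Infinite K] [Finite ι] {v : ι → σ → K}
    (hv : ∀ i, v i ≠ 0) : ∃ a, ∀ i, eval (v i) (linearForm a) ≠ 0 := by
  obtain ⟨f, hf⟩ := Module.exists_dual_forall_apply_ne_zero (K := K) v hv
  obtain ⟨a, ha⟩ := exists_eval_linearForm_eq f
  exact ⟨a, fun i => ha (v i) ▸ hf i⟩

theorem exists_linearForm_eval_ne_zero_eval_eq_zero {v w : σ → K}
    (hvw : v ∉ Submodule.span K {w}) :
    ∃ a, eval v (linearForm a) ≠ 0 ∧ eval w (linearForm a) = 0 := by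
  obtain ⟨f, hfv, hker⟩ := Submodule.exists_le_ker_of_notMem hvw
  obtain ⟨a, ha⟩ := exists_eval_linearForm_eq f
  exact ⟨a, ha v ▸ hfv, (ha w).trans (hker (Submodule.mem_span_singleton_self w))⟩

end Separation

theorem surjective_evalForms_of_finrank_range_succ_le {ι σ K : Type*} [Field K] [Infinite K]
    [Finite ι] [Finite σ] {v : ι → σ → K} {d : ℕ} (hv : ∀ i, v i ≠ 0)
    (hsep : Pairwise fun i j => v i ∉ Submodule.span K {v j})
    (hle : Module.finrank K (LinearMap.range (evalForms v (d + 1))) ≤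
      Module.finrank K (LinearMap.range (evalForms v d))) :
    Function.Surjective (evalForms v d) := by
  have := Fintype.ofFinite σ
  obtain ⟨a, ha⟩ := exists_linearForm_forall_eval_ne_zero hv
  refine LinearMap.range_eq_top.mp
    (eq_top_of_separating_multipliers (fun i => ?_) fun i j hij => ?_)
  · have hpow : (linearForm a ^ d).IsHomogeneous d := by
      simpa only [one_mul] using (isHomogeneous_linearForm a).pow d
    refine ⟨_, LinearMap.mem_range_self _ ⟨linearForm a ^ d, hpow⟩, ?_⟩
    rw [evalForms_apply, map_pow]
    exact pow_ne_zero d (ha i)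
  · obtain ⟨b, hbi, hbj⟩ := exists_linearForm_eval_ne_zero_eval_eq_zero (hsep hij)
    refine ⟨(fun k => eval (v k) (linearForm b)) / fun k => eval (v k) (linearForm a),
      fun w hw => ?_, div_ne_zero hbi (ha i), div_eq_zero_iff.mpr (.inl hbj)⟩
    exact div_mul_mem_of_finrank_le ha
      (fun _ => eval_linearForm_mul_mem_range_evalForms v a)
      (fun _ => eval_linearForm_mul_mem_range_evalForms v b) hle hw

theorem cast_multinomial_ne_zero {σ K : Type*} [Semiring K] {d : ℕ} (hd : (d.factorial : K) ≠ 0)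
    {α : σ →₀ ℕ} (hα : α.sum (fun _ m => m) = d) : (α.multinomial : K) ≠ 0 := by
  have hdvd : α.multinomial ∣ d.factorial := by
    rw [← hα, Finsupp.multinomial_eq]
    exact Dvd.intro_left _ (Nat.multinomial_spec α.support α)
  exact ne_zero_of_dvd_ne_zero hd (Nat.cast_dvd_cast hdvd)

section Apolarity

variable {ι σ K : Type*} [Field K] [Fintype σ]

/-- The functional on polynomials given by the apolarity pairing with `F`. The pairing is
normalized so that, for `F` homogeneous of degree `d`, it takes the `d`-th power of a linear form
to the value of `F` at the coefficient vector of that form. -/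
noncomputable def apolarFunctional (F : MvPolynomial σ K) : Module.Dual K (MvPolynomial σ K) :=
  ∑ α ∈ F.support, (coeff α F / α.multinomial) • lcoeff K α

theorem apolarFunctional_linearForm_pow {d : ℕ} (hd : (d.factorial : K) ≠ 0)
    {F : MvPolynomial σ K} (hF : F.IsHomogeneous d) (a : σ → K) :
    apolarFunctional F (linearForm a ^ d) = eval a F := by
  simp only [apolarFunctional, LinearMap.sum_apply, LinearMap.smul_apply, lcoeff_apply, eval_eq']
  refine Finset.sum_congr rfl fun α hα => ?_
  have hdeg : α.sum (fun _ m => m) = d :=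
    of_not_not fun hne => mem_support_iff.mp hα (hF.coeff_eq_zero hne)
  have hcoeff : coeff α (linearForm a ^ d) = α.multinomial * ∏ j, a j ^ α j := by
    simp only [linearForm, ← smul_eq_C_mul]
    rw [coeff_linearCombination_X_pow_of_fintype, if_pos hdeg,
      Finsupp.prod_fintype _ _ fun _ => pow_zero _]
  rw [hcoeff, smul_eq_mul, ← mul_assoc, div_mul_cancel₀ _ (cast_multinomial_ne_zero hd hdeg)]

theorem linearIndependent_linearForm_pow {v : ι → σ → K} {d : ℕ} (hd : (d.factorial : K) ≠ 0)
    (hsurj : Function.Surjective (evalForms v d)) :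
    LinearIndependent K fun i => linearForm (v i) ^ d := by
  classical
  choose F hF using fun i => hsurj (Pi.single i 1)
  have hpair (i j : ι) :
      apolarFunctional (F i : MvPolynomial σ K) (linearForm (v j) ^ d) =
        (Pi.single i 1 : ι → K) j := by
    rw [apolarFunctional_linearForm_pow hd (F i).2, ← hF i, evalForms_apply]
  exact .of_pairwise_dual_eq_zero_one _ (fun i => apolarFunctional (F i : MvPolynomial σ K))
    (fun i j hij => (hpair i j).trans (Pi.single_eq_of_ne hij.symm 1))
    (fun i => (hpair i i).trans (Pi.single_eq_same i 1))

end Apolarity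

section ProjectivePoints

open scoped LinearAlgebra.Projectivization

variable {σ K : Type*} [Field K]

theorem rep_notMem_span_singleton_rep {V : Type*} [AddCommGroup V] [Module K V] {P Q : ℙ K V}
    (hPQ : P ≠ Q) : P.rep ∉ Submodule.span K {Q.rep} := fun h => hPQ <| by
  rw [← P.mk_rep, ← Q.mk_rep, Projectivization.mk_eq_mk_iff']
  exact Submodule.mem_span_singleton.mp h

/-- The Hilbert function of a finite set of points over any field; for points of `ℙⁿ(ℂ)` it is
`hilb` by definition. -/
noncomputable def hilbertFn (Z : Finset (ℙ K (σ → K))) (d : ℕ) : ℕ :=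
  Module.finrank K (LinearMap.range (evalForms (fun P : Z => P.1.rep) d))

theorem hilbertFn_lt_card {Z : Finset (ℙ K (σ → K))} {d : ℕ}
    (h : ¬ Function.Surjective (evalForms (fun P : Z => P.1.rep) d)) :
    hilbertFn Z d < Z.card := by
  simpa [hilbertFn] using Submodule.finrank_lt (mt LinearMap.range_eq_top.mp h)

theorem hilbertFn_lt_hilbertFn_succ [Finite σ] [Infinite K] {Z : Finset (ℙ K (σ → K))} {d : ℕ}
    (h : ¬ Function.Surjective (evalForms (fun P : Z => P.1.rep) d)) :
    hilbertFn Z d < hilbertFn Z (d + 1) :=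
  lt_of_not_ge fun hle => h <| surjective_evalForms_of_finrank_range_succ_le
    (fun P => P.1.rep_nonzero)
    (fun _ _ hPQ => rep_notMem_span_singleton_rep (Subtype.coe_ne_coe.mpr hPQ)) hle

variable [Fintype σ]

/-- `Z` is a decomposition of `T` into `d`-th powers of linear forms, over any field; for points
of `ℙⁿ(ℂ)` this is `IsDecomp` by definition. -/
def IsPowerDecomp (d : ℕ) (T : MvPolynomial σ K) (Z : Finset (ℙ K (σ → K))) : Prop :=
  T ∈ Submodule.span K ((fun P : ℙ K (σ → K) => linearForm P.rep ^ d) '' (Z : Set (ℙ K (σ → K))))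

variable [DecidableEq (ℙ K (σ → K))] {d : ℕ} {T : MvPolynomial σ K} {A B : Finset (ℙ K (σ → K))}

theorem IsPowerDecomp.inter (hd : (d.factorial : K) ≠ 0) (hA : IsPowerDecomp d T A)
    (hB : IsPowerDecomp d T B)
    (hsurj : Function.Surjective (evalForms (fun P : (A ∪ B : Finset _) => P.1.rep) d)) :
    IsPowerDecomp d T (A ∩ B) := by
  have hindep : LinearIndepOn K (fun P : ℙ K (σ → K) => linearForm P.rep ^ d)
      ((A ∪ B : Finset _) : Set (ℙ K (σ → K))) :=
    linearIndependent_linearForm_pow hd hsurj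
  rw [Finset.coe_union] at hindep
  rw [IsPowerDecomp, Finset.coe_inter]
  exact mem_span_image_inter_of_linearIndepOn hindep hA hB

theorem not_surjective_evalForms_union_of_minimal (hd : (d.factorial : K) ≠ 0)
    (hA : Minimal (IsPowerDecomp d T) A) (hB : Minimal (IsPowerDecomp d T) B) (hAB : A ≠ B) :
    ¬ Function.Surjective (evalForms (fun P : (A ∪ B : Finset _) => P.1.rep) d) := fun hsurj => by
  have hinter : IsPowerDecomp d T (A ∩ B) := hA.prop.inter hd hB.prop hsurj
  exact hAB <| (hA.eq_of_ge hinter Finset.inter_subset_left).trans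
    (hB.eq_of_le hinter Finset.inter_subset_right)

theorem two_minimal_decomps_hilb_lt_general [Infinite K] (hd : (d.factorial : K) ≠ 0)
    (hA : Minimal (IsPowerDecomp d T) A) (hB : Minimal (IsPowerDecomp d T) B) (hAB : A ≠ B) :
    hilbertFn (A ∪ B) d < (A ∪ B).card ∧ hilbertFn (A ∪ B) d < hilbertFn (A ∪ B) (d + 1) :=
  have h := not_surjective_evalForms_union_of_minimal hd hA hB hAB
  ⟨hilbertFn_lt_card h, hilbertFn_lt_hilbertFn_succ h⟩

end ProjectivePoints

theorem dHilb_natCast_succ (n : ℕ) (Z : Finset (ProjPt n)) (d : ℕ) :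
    dHilb n Z ((d : ℤ) + 1) = hilb n Z (d + 1) - hilb n Z d := by
  have hnonneg : ¬ (d : ℤ) < 0 := by omega
  have hnonneg' : ¬ (d : ℤ) + 1 < 0 := by omega
  simp only [dHilb, hilbZ, add_sub_cancel_right, if_neg hnonneg, if_neg hnonneg', Int.toNat_natCast,
    Int.toNat_natCast_add_one]

/-- If `A ≠ B` are two minimal decompositions of `T ∈ ℙ(Symᵈ(ℂⁿ⁺¹))`, then `Z = A ∪ B`
satisfies `h_Z(d) < ℓ(Z)`, and consequently `Dh_Z(d+1) > 0`. -/
theorem two_minimal_decomps_hilb_lt (n d : ℕ) [DecidableEq (ProjPt n)]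
    (T : MvPolynomial (Fin (n+1)) ℂ) (hT : T ≠ 0)
    (A B : Finset (ProjPt n)) (hA : IsMinimalDecomp n d T A) (hB : IsMinimalDecomp n d T B)
    (hAB : A ≠ B) :
    hilb n (A ∪ B) d < (A ∪ B).card ∧ 0 < dHilb n (A ∪ B) ((d : ℤ) + 1) := by
  rw [dHilb_natCast_succ, sub_pos, Nat.cast_lt]
  exact two_minimal_decomps_hilb_lt_general (Nat.cast_ne_zero.mpr d.factorial_ne_zero)
    (minimal_iff_forall_lt.mpr hA) (minimal_iff_forall_lt.mpr hB) hAB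
end

section
/- Let Z ⊂ ℙⁿ(ℂ) be a finite set, let h be a nonzero linear form with hyperplane H = {h = 0}, let Z₁ = Z ∩ H and Z₂ = Z ∖ Z₁. Assume Z₂ is linearly independent. Then every quadric of H containing Z₁ lifts to a quadric of ℙⁿ containing Z: for every homogeneous quadratic form Q₀ on the subspace W = ker(h) ⊂ ℂⁿ⁺¹ vanishing at coordinate vectors of all points of Z₁, there exists a homogeneous polynomial Q of degree 2 on ℂⁿ⁺¹ vanishing at coordinate vectors of all points of Z whose restriction to W equals Q₀. -/
open MvPolynomial

/-!
Extend `Q₀` to a quadratic form `Q₁` on the whole space by composing it with a projection onto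
`ker h`. Adding to `Q₁` a product `h * l` with `l` a linear form does not change the restriction to
`ker h`, and the sum vanishes at a vector `x` off `ker h` as soon as `l x = -Q₁ x / h x`.
Linear independence is what allows these values of `l` to be prescribed simultaneously.
-/

theorem exists_linearMap_apply_eq_of_linearIndepOn {ι K V W : Type*} [DivisionRing K]
    [AddCommGroup V] [Module K V] [AddCommGroup W] [Module K W] {v : ι → V} {s : Set ι}
    (hv : LinearIndepOn K v s) (c : ι → W) :
    ∃ l : V →ₗ[K] W, ∀ i ∈ s, l (v i) = c i := by
  obtain ⟨l, hl⟩ := ((Module.Basis.span hv).constr ℕ fun i : s => c i).exists_extend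
  refine ⟨l, fun i hi => ?_⟩
  have hbasis : (Module.Basis.span hv ⟨i, hi⟩ : V) = v i :=
    congrArg Subtype.val (Module.Basis.span_apply hv ⟨i, hi⟩)
  rw [← hbasis, ← Submodule.subtype_apply, ← LinearMap.comp_apply, hl, Module.Basis.constr_basis]

theorem exists_quadraticMap_extend {K V N : Type*} [Field K] [AddCommGroup V] [Module K V]
    [AddCommGroup N] [Module K N] {p : Submodule K V} (Q : QuadraticMap K p N) :
    ∃ Q' : QuadraticMap K V N, ∀ w : p, Q' w = Q w := by
  obtain ⟨π, hπ⟩ := (LinearMap.id : p →ₗ[K] p).exists_extend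
  exact ⟨Q.comp π, fun w => congrArg Q (LinearMap.congr_fun hπ w)⟩

theorem exists_quadraticForm_extend_ker_vanishing {ι K V : Type*} [Field K] [AddCommGroup V]
    [Module K V] {v : ι → V} {s : Set ι} {h : V →ₗ[K] K}
    (hv : LinearIndepOn K v {i ∈ s | h (v i) ≠ 0}) {Q₀ : QuadraticForm K (LinearMap.ker h)}
    (hQ₀ : ∀ i ∈ s, ∀ hi : v i ∈ LinearMap.ker h, Q₀ ⟨v i, hi⟩ = 0) :
    ∃ Q : QuadraticForm K V, (∀ i ∈ s, Q (v i) = 0) ∧ ∀ w : LinearMap.ker h, Q w = Q₀ w := by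
  obtain ⟨Q₁, hQ₁⟩ := exists_quadraticMap_extend Q₀
  obtain ⟨l, hl⟩ := exists_linearMap_apply_eq_of_linearIndepOn hv fun i => -Q₁ (v i) / h (v i)
  let Q : QuadraticForm K V := Q₁ + QuadraticMap.linMulLin h l
  have hQ (x : V) : Q x = Q₁ x + h x * l x := rfl
  have hrestrict (w : LinearMap.ker h) : Q w = Q₀ w := by
    rw [hQ, LinearMap.mem_ker.mp w.2, zero_mul, add_zero, hQ₁]
  refine ⟨Q, fun i hi => ?_, hrestrict⟩
  by_cases hker : h (v i) = 0
  · exact (hrestrict ⟨v i, hker⟩).trans (hQ₀ i hi hker)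
  · rw [hQ, hl i ⟨hi, hker⟩, mul_div_cancel₀ _ hker, add_neg_cancel]

theorem exists_isHomogeneous_two_eval_eq_quadraticForm {σ R : Type*} [Finite σ] [CommRing R]
    (Q : QuadraticForm R (σ → R)) :
    ∃ p : MvPolynomial σ R, p.IsHomogeneous 2 ∧ ∀ x, eval x p = Q x := by
  classical
  have := Fintype.ofFinite σ
  -- `QuadraticMap.associated` would give a symmetric `B`, but only when `2` is invertible.
  obtain ⟨B, rfl⟩ := LinearMap.BilinMap.toQuadraticMap_surjective Q
  refine ⟨∑ i, ∑ j, C (LinearMap.toMatrix₂' R B i j) * (X i * X j), ?_, fun x => ?_⟩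
  · exact .sum _ _ _ fun i _ => .sum _ _ _ fun j _ =>
      ((isHomogeneous_X R i).mul (isHomogeneous_X R j)).C_mul _
  · calc
      eval x (∑ i, ∑ j, C (LinearMap.toMatrix₂' R B i j) * (X i * X j))
          = ∑ i, ∑ j, LinearMap.toMatrix₂' R B i j * (x i * x j) := by
        simp only [map_sum, map_mul, eval_C, eval_X]
      _ = Matrix.toLinearMap₂' R (LinearMap.toMatrix₂' R B) x x := by
        simp only [Matrix.toLinearMap₂'_apply, smul_eq_mul, mul_comm, mul_assoc]
      _ = B x x := by rw [Matrix.toLinearMap₂'_toMatrix']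

theorem lift_quadric_of_residue_indep_general {ι σ K : Type*} [Finite σ] [Field K]
    (v : ι → σ → K) (s : Set ι) (h : (σ → K) →ₗ[K] K)
    (hindep : LinearIndepOn K v {i ∈ s | h (v i) ≠ 0})
    (Q₀ : QuadraticForm K (LinearMap.ker h))
    (hQ₀ : ∀ i ∈ s, ∀ hi : v i ∈ LinearMap.ker h, Q₀ ⟨v i, hi⟩ = 0) :
    ∃ Q : MvPolynomial σ K, Q.IsHomogeneous 2 ∧
      (∀ i ∈ s, eval (v i) Q = 0) ∧
      (∀ w : LinearMap.ker h, eval (w : σ → K) Q = Q₀ w) := by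
  obtain ⟨q, hvanish, hrestrict⟩ := exists_quadraticForm_extend_ker_vanishing hindep hQ₀
  obtain ⟨Q, hQ, heval⟩ := exists_isHomogeneous_two_eval_eq_quadraticForm q
  exact ⟨Q, hQ, fun i hi => (heval _).trans (hvanish i hi), fun w => (heval _).trans (hrestrict w)⟩

/-- Lifting quadrics from a hyperplane: let `Z ⊂ ℙⁿ(ℂ)` be finite, `h` a nonzero linear
form with hyperplane `H = {h = 0}`, `Z₁ = Z ∩ H`, and `Z₂ = Z ∖ Z₁`.  If `Z₂` is linearly
independent, then every quadratic form `Q₀` on `W = ker h` vanishing at (coordinate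
vectors of) the points of `Z₁` is the restriction to `W` of a quadric `Q` of `ℙⁿ`
vanishing at all points of `Z`. -/
theorem lift_quadric_of_residue_indep (n : ℕ) (Z : Finset (ProjPt n))
    (h : (Fin (n+1) → ℂ) →ₗ[ℂ] ℂ) (hh : h ≠ 0)
    (hindep : LinearIndependent ℂ
      (fun P : { x : ProjPt n // x ∈ Z ∧ h x.rep ≠ 0 } => P.1.rep))
    (Q₀ : QuadraticForm ℂ ↥(LinearMap.ker h))
    (hQ₀ : ∀ P ∈ Z, ∀ hp : P.rep ∈ LinearMap.ker h, Q₀ ⟨P.rep, hp⟩ = 0) :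
    ∃ Q : MvPolynomial (Fin (n+1)) ℂ, Q.IsHomogeneous 2 ∧
      (∀ P ∈ Z, eval P.rep Q = 0) ∧
      (∀ w : ↥(LinearMap.ker h), eval (w : Fin (n+1) → ℂ) Q = Q₀ w) := by
  exact lift_quadric_of_residue_indep_general Projectivization.rep (Z : Set (ProjPt n)) h
    hindep Q₀ hQ₀
end

section
/- Let W ⊂ ℙⁿ(ℂ) be a linearly independent finite set and let Q ∈ ℙⁿ be a point not in W. Then there exists a homogeneous polynomial of degree 2 in n+1 variables vanishing at coordinate vectors of all points of W and not vanishing at a coordinate vector of Q. (In other words, the homogeneous ideal of a linearly independent finite set is generated by quadrics.) -/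
open MvPolynomial

/-!
Let `q` be a representative of `Q`. Since the representatives of the points of `W` are independent
and `q` is not proportional to any of them, `W` splits into two parts neither of which has `q` in
its span: if `q` lies in the span of `W`, split off a point with nonzero coefficient in the
expansion of `q`; otherwise take all of `W` and the empty set. For each part choose a linear form
vanishing on it but not at `q`; the product of the two linear forms is the required quadric.
-/

section LinearForms

variable {σ : Type*} [Finite σ]

theorem exists_isHomogeneous_one_eval_eq {R : Type*} [CommSemiring R] (f : Module.Dual R (σ → R)) :
    ∃ L : MvPolynomial σ R, L.IsHomogeneous 1 ∧ ∀ x, eval x L = f x := by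
  classical
  cases nonempty_fintype σ
  let A : Matrix Unit σ R := LinearMap.toMatrix' (LinearMap.pi fun _ => f)
  refine ⟨A.toMvPolynomial (), A.toMvPolynomial_isHomogeneous (), fun x => ?_⟩
  rw [Matrix.toMvPolynomial_eval_eq_apply, LinearMap.toMatrix'_mulVec, LinearMap.pi_apply]

variable {K : Type*} [Field K] {q : σ → K}

theorem exists_isHomogeneous_one_eval_ne_zero_of_notMem {U : Submodule K (σ → K)} (hq : q ∉ U) :
    ∃ L : MvPolynomial σ K, L.IsHomogeneous 1 ∧ (∀ x ∈ U, eval x L = 0) ∧ eval q L ≠ 0 := by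
  obtain ⟨f, hfq, hfU⟩ := Submodule.exists_le_ker_of_notMem hq
  obtain ⟨L, hL, hLf⟩ := exists_isHomogeneous_one_eval_eq f
  exact ⟨L, hL, fun x hx => (hLf x).trans (hfU hx), (hLf q).trans_ne hfq⟩

theorem exists_isHomogeneous_card_eval_ne_zero_of_forall_notMem {κ : Type*} [Fintype κ]
    {U : κ → Submodule K (σ → K)} (hq : ∀ k, q ∉ U k) :
    ∃ F : MvPolynomial σ K, F.IsHomogeneous (Fintype.card κ) ∧
      (∀ k, ∀ x ∈ U k, eval x F = 0) ∧ eval q F ≠ 0 := by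
  choose L hL hLU hLq using fun k => exists_isHomogeneous_one_eval_ne_zero_of_notMem (hq k)
  refine ⟨∏ k, L k, ?_, fun k x hx => ?_, ?_⟩
  · simpa using IsHomogeneous.prod Finset.univ L (fun _ => 1) fun k _ => hL k
  · rw [eval_prod]
    exact Finset.prod_eq_zero (Finset.mem_univ k) (hLU k x hx)
  · rw [eval_prod]
    exact Finset.prod_ne_zero_iff.2 fun k _ => hLq k

end LinearForms

section Span

variable {ι R M : Type*} [Semiring R] [AddCommMonoid M] [Module R M] {v : ι → M} {x : M}

theorem exists_notMem_span_image_compl_singleton (hv : LinearIndependent R v) (hx : x ≠ 0)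
    (hmem : x ∈ Submodule.span R (Set.range v)) :
    ∃ i, x ∉ Submodule.span R (v '' {i}ᶜ) := by
  obtain ⟨l, rfl⟩ := Finsupp.mem_span_range_iff_exists_finsupp.1 hmem
  obtain ⟨i, hi⟩ : ∃ i, l i ≠ 0 := by
    by_contra! hl
    exact hx (by simp [Finsupp.sum, hl])
  refine ⟨i, fun hspan => ?_⟩
  obtain ⟨m, hm, hml⟩ := (Finsupp.mem_span_image_iff_linearCombination R).1 hspan
  obtain rfl : m = l := hv hml
  exact hm (Finsupp.mem_support_iff.2 hi) rfl

theorem exists_notMem_span_image_and_notMem_span_image_compl (hv : LinearIndependent R v)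
    (hx : x ≠ 0) (hxv : ∀ i, x ∉ Submodule.span R {v i}) :
    ∃ s : Set ι, x ∉ Submodule.span R (v '' s) ∧ x ∉ Submodule.span R (v '' sᶜ) := by
  by_cases hmem : x ∈ Submodule.span R (Set.range v)
  · obtain ⟨i, hi⟩ := exists_notMem_span_image_compl_singleton hv hx hmem
    exact ⟨{i}, by simpa using hxv i, hi⟩
  · exact ⟨Set.univ, by simpa using hmem, by simpa using hx⟩

end Span

section Projective

open scoped LinearAlgebra.Projectivization

theorem rep_mem_span_singleton_rep_iff {K V : Type*} [DivisionRing K] [AddCommGroup V] [Module K V]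
    {p q : ℙ K V} :
    q.rep ∈ Submodule.span K {p.rep} ↔ q = p := by
  rw [Submodule.mem_span_singleton,
    ← Projectivization.mk_eq_mk_iff' K _ _ q.rep_nonzero p.rep_nonzero, q.mk_rep, p.mk_rep]

theorem indep_separated_by_quadric_general {K σ ι : Type*} [Field K] [Finite σ]
    {p : ι → ℙ K (σ → K)} (hp : Projectivization.Independent p) {q : ℙ K (σ → K)}
    (hq : q ∉ Set.range p) :
    ∃ F : MvPolynomial σ K, F.IsHomogeneous 2 ∧ (∀ i, eval (p i).rep F = 0) ∧
      eval q.rep F ≠ 0 := by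
  have hspan : ∀ i, q.rep ∉ Submodule.span K {(p i).rep} := fun i hi =>
    hq ⟨i, (rep_mem_span_singleton_rep_iff.1 hi).symm⟩
  obtain ⟨s, hs, hsc⟩ := exists_notMem_span_image_and_notMem_span_image_compl
    (Projectivization.independent_iff.1 hp) q.rep_nonzero hspan
  obtain ⟨F, hF, hFU, hFq⟩ := exists_isHomogeneous_card_eval_ne_zero_of_forall_notMem
    (U := ![Submodule.span K (_ '' s), Submodule.span K (_ '' sᶜ)])
    (Fin.forall_fin_two.2 ⟨hs, hsc⟩)
  refine ⟨F, hF, fun i => ?_, hFq⟩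
  by_cases hi : i ∈ s
  · exact hFU 0 _ (Submodule.subset_span ⟨i, hi, rfl⟩)
  · exact hFU 1 _ (Submodule.subset_span ⟨i, hi, rfl⟩)

end Projective

/-- A linearly independent finite set `W ⊂ ℙⁿ(ℂ)` is cut out by quadrics: for every point
`Q ∉ W` there is a homogeneous polynomial of degree `2` vanishing at all points of `W`
and not vanishing at `Q`. -/
theorem indep_separated_by_quadric (n : ℕ) (W : Finset (ProjPt n))
    (hW : LinearIndependent ℂ (fun P : { x // x ∈ W } => (P : ProjPt n).rep))
    (Q : ProjPt n) (hQ : Q ∉ W) :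
    ∃ F : MvPolynomial (Fin (n+1)) ℂ, F.IsHomogeneous 2 ∧
      (∀ P ∈ W, eval P.rep F = 0) ∧ eval Q.rep F ≠ 0 := by
  obtain ⟨F, hF, hFW, hFQ⟩ := indep_separated_by_quadric_general
    (Projectivization.independent_iff.2 hW) (q := Q) (by simpa using hQ)
  exact ⟨F, hF, fun P hP => hFW ⟨P, hP⟩, hFQ⟩
end
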